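/- arXiv:2605.31356 — 2 statements merged into one kernel-verified Lean document; each statement's English description precedes it below -/
import Mathlib

section
/- Let c ∈ ℝ, let Σ be a finite positive Borel measure on ℝ, and let μ be the free infinitely divisible measure with Lévy pair (c,Σ). Then: (i) for every z ∈ ℂ₊, u = G_μ(z) lies in ℂ₋ and is the unique u ∈ ℂ₋ satisfying z − 1/u − R_{c,Σ}(u) = 0; (ii) if z ∈ ℝ and the limit L = lim_{y→0+} G_μ(z + i·y) exists with Im L < 0, then u = L is the unique u ∈ ℂ₋ satisfying z − 1/u − R_{c,Σ}(u) = 0. -/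
/-!
The left-hand side of the equation determines `u` because of an elementary Cauchy-Schwarz
argument.  If `u, v ∈ ℂ₋` both solve `w - 1/u - R(u) = 0` with `Im w ≥ 0`, put
`f = u/(1-xu)` and `g = v/(1-xv)`; both take values in `ℂ₋`.

* Imaginary parts of the equation give `∫ (1+x²)|f|² dΣ ≤ 1`, and likewise for `g`.
* Subtracting the two equations and dividing by `u - v ≠ 0` gives `∫ (1+x²) f g dΣ = 1`.

Hence `∫ (1+x²)|f - conj g|² dΣ ≤ 1 + 1 - 2 = 0`.  But `Im (f - conj g) < 0` everywhere, so
`Σ = 0`, which contradicts `∫ (1+x²) f g dΣ = 1`.  The argument covers real `w` as well as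
`w ∈ ℂ₊`, so the remaining points are `Im G_μ < 0` on `ℂ₊` and the continuity of `R` on `ℂ₋`,
which transports the functional equation to the boundary limit `L`.
-/


open Complex Filter Topology MeasureTheory

/-- The Cauchy transform `G_μ(z) = ∫ 1/(z−t) dμ(t)` of a measure on `ℝ`. -/
noncomputable def cauchyG (μ : Measure ℝ) (z : ℂ) : ℂ :=
  ∫ t : ℝ, 1 / (z - (t : ℂ)) ∂μ

/-- The `R`-transform `R_{c,Σ}(u) = c + ∫ (u+x)/(1−x·u) dΣ(x)` associated to a Lévy pair. -/
noncomputable def Rtrans (c : ℝ) (lev : Measure ℝ) (u : ℂ) : ℂ :=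
  (c : ℂ) + ∫ x : ℝ, (u + (x : ℂ)) / (1 - (x : ℂ) * u) ∂lev

lemma ne_zero_of_im_neg {u : ℂ} (hu : u.im < 0) : u ≠ 0 := by
  rintro rfl
  simp at hu

lemma one_sub_mul_ne_zero {u : ℂ} (hu : u.im < 0) (x : ℝ) : 1 - (x : ℂ) * u ≠ 0 := by
  intro h
  have him := congrArg Complex.im h
  have hre := congrArg Complex.re h
  simp at him hre
  rcases him with rfl | h0
  · simp at hre
  · exact hu.ne h0

/-- The distance from `1/u` to the real line bounds `|1 - xu| = |u| |1/u - x|` from below. -/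
lemma norm_one_sub_mul_ge {u : ℂ} (hu : u.im < 0) (x : ℝ) :
    -u.im / ‖u‖ ≤ ‖1 - (x : ℂ) * u‖ := by
  have h0 : 0 < ‖u‖ := norm_pos_iff.mpr (ne_zero_of_im_neg hu)
  rw [div_le_iff₀ h0]
  have h1 : ((1 - (x : ℂ) * u) * (starRingEnd ℂ) u).im = -u.im := by
    simp [Complex.mul_im]
    ring
  calc -u.im = ((1 - (x : ℂ) * u) * (starRingEnd ℂ) u).im := h1.symm
    _ ≤ ‖(1 - (x : ℂ) * u) * (starRingEnd ℂ) u‖ := Complex.im_le_norm _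
    _ = ‖1 - (x : ℂ) * u‖ * ‖u‖ := by rw [norm_mul, Complex.norm_conj]

/-- A bound for the kernel of the `R`-transform that is uniform in `x` and continuous in `u`. -/
lemma norm_kernel_le {u : ℂ} (hu : u.im < 0) (x : ℝ) :
    ‖(u + (x : ℂ)) / (1 - (x : ℂ) * u)‖ ≤ ‖u⁻¹‖ + ‖u + u⁻¹‖ / (-u.im / ‖u‖) := by
  have hu0 := ne_zero_of_im_neg hu
  have h1 := one_sub_mul_ne_zero hu x
  have h2 : (u + (x : ℂ)) / (1 - (x : ℂ) * u) = -u⁻¹ + (u + u⁻¹) / (1 - (x : ℂ) * u) := by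
    rw [div_eq_iff h1, add_mul, div_mul_cancel₀ _ h1]
    field_simp
    ring
  have h3 : 0 < -u.im / ‖u‖ := div_pos (by linarith) (norm_pos_iff.mpr hu0)
  rw [h2]
  refine (norm_add_le _ _).trans ?_
  rw [norm_neg, norm_div]
  gcongr
  exact norm_one_sub_mul_ge hu x

lemma kernel_aestronglyMeasurable (lev : Measure ℝ) (u : ℂ) :
    AEStronglyMeasurable (fun x : ℝ => (u + (x : ℂ)) / (1 - (x : ℂ) * u)) lev := by
  apply Measurable.aestronglyMeasurable
  fun_prop

lemma kernel_integrable (lev : Measure ℝ) [IsFiniteMeasure lev] {u : ℂ} (hu : u.im < 0) :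
    Integrable (fun x : ℝ => (u + (x : ℂ)) / (1 - (x : ℂ) * u)) lev :=
  Integrable.of_bound (kernel_aestronglyMeasurable lev u) _
    (Eventually.of_forall (norm_kernel_le hu))

lemma Rtrans_continuousAt (c : ℝ) (lev : Measure ℝ) [IsFiniteMeasure lev] {L : ℂ}
    (hL : L.im < 0) : ContinuousAt (Rtrans c lev) L := by
  have hL0 := ne_zero_of_im_neg hL
  have hB : ContinuousAt (fun u : ℂ => ‖u⁻¹‖ + ‖u + u⁻¹‖ / (-u.im / ‖u‖)) L := by
    have h1 : ‖L‖ ≠ 0 := norm_ne_zero_iff.mpr hL0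
    have h2 : -L.im / ‖L‖ ≠ 0 := div_ne_zero (by linarith) h1
    have him : ContinuousAt Complex.im L := Complex.continuous_im.continuousAt
    have hinv : ContinuousAt (fun u : ℂ => u⁻¹) L := continuousAt_inv₀ hL0
    exact hinv.norm.add ((continuousAt_id.add hinv).norm.div
      (him.neg.div continuousAt_id.norm h1) h2)
  have hneg : ∀ᶠ u in 𝓝 L, u.im < 0 :=
    Complex.continuous_im.continuousAt.eventually_lt continuousAt_const hL
  have hlt := hB.eventually_lt (continuousAt_const (y := _ + 1)) (lt_add_one _)
  unfold Rtrans
  refine continuousAt_const.add ?_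
  refine continuousAt_of_dominated
    (bound := fun _ => ‖L⁻¹‖ + ‖L + L⁻¹‖ / (-L.im / ‖L‖) + 1)
    (Eventually.of_forall (kernel_aestronglyMeasurable lev)) ?_ (integrable_const _) ?_
  · filter_upwards [hneg, hlt] with u hu hu'
    exact Eventually.of_forall fun x => (norm_kernel_le hu x).trans hu'.le
  · refine Eventually.of_forall fun x => ?_
    exact (continuousAt_id.add continuousAt_const).div
      (continuousAt_const.sub (continuousAt_const.mul continuousAt_id)) (one_sub_mul_ne_zero hL x)

/-- The imaginary part of the kernel, written with `|f|²` for `f = u/(1-xu)`. -/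
lemma kernel_im {u : ℂ} (hu : u.im < 0) (x : ℝ) :
    (1 + x ^ 2) * Complex.normSq (u / (1 - (x : ℂ) * u)) =
      Complex.normSq u / u.im * ((u + (x : ℂ)) / (1 - (x : ℂ) * u)).im := by
  have h1 : Complex.normSq (1 - (x : ℂ) * u) ≠ 0 := by
    rw [Ne, Complex.normSq_eq_zero]
    exact one_sub_mul_ne_zero hu x
  have h2 := hu.ne
  rw [Complex.div_im, Complex.normSq_div]
  field_simp
  simp
  ring

lemma Rtrans_im (c : ℝ) (lev : Measure ℝ) [IsFiniteMeasure lev] {u : ℂ} (hu : u.im < 0) :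
    (Rtrans c lev u).im = ∫ x : ℝ, ((u + (x : ℂ)) / (1 - (x : ℂ) * u)).im ∂lev := by
  have h := integral_im (kernel_integrable lev hu)
  simp only [RCLike.im_to_complex] at h
  simp [Rtrans, h]

lemma integrable_normSq (lev : Measure ℝ) [IsFiniteMeasure lev] {u : ℂ} (hu : u.im < 0) :
    Integrable (fun x : ℝ => (1 + x ^ 2) * Complex.normSq (u / (1 - (x : ℂ) * u))) lev := by
  simp_rw [kernel_im hu]
  exact (kernel_integrable lev hu).im.const_mul _

/-- Imaginary part of the saddle-point equation: `∫ (1+x²)|f|² dΣ = 1 + Im w |u|² / Im u ≤ 1`. -/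
lemma integral_normSq_le_one (c : ℝ) (lev : Measure ℝ) [IsFiniteMeasure lev] {w u : ℂ}
    (hw : 0 ≤ w.im) (hu : u.im < 0) (h : w - 1 / u - Rtrans c lev u = 0) :
    ∫ x : ℝ, (1 + x ^ 2) * Complex.normSq (u / (1 - (x : ℂ) * u)) ∂lev ≤ 1 := by
  simp_rw [kernel_im hu]
  rw [integral_const_mul, ← Rtrans_im c lev hu]
  have hn : 0 < Complex.normSq u := Complex.normSq_pos.mpr (ne_zero_of_im_neg hu)
  have him : (Rtrans c lev u).im = w.im + u.im / Complex.normSq u := by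
    rw [← sub_eq_zero.mp h]
    simp [Complex.inv_im]
    ring
  have hne := hu.ne
  have heq : Complex.normSq u / u.im * (w.im + u.im / Complex.normSq u) =
      1 + w.im * Complex.normSq u / u.im := by
    field_simp
    ring
  rw [him, heq]
  have : w.im * Complex.normSq u / u.im ≤ 0 :=
    div_nonpos_of_nonneg_of_nonpos (by positivity) hu.le
  linarith

/-- The integrand `(1+x²) f g` is a multiple of a difference of two kernels. -/
lemma cross_eq {u v : ℂ} (hu : u.im < 0) (hv : v.im < 0) (huv : u ≠ v) (x : ℝ) :
    (1 + (x : ℂ) ^ 2) * (u / (1 - (x : ℂ) * u) * (v / (1 - (x : ℂ) * v))) =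
      u * v / (u - v) *
        ((u + (x : ℂ)) / (1 - (x : ℂ) * u) - (v + (x : ℂ)) / (1 - (x : ℂ) * v)) := by
  have h1 := one_sub_mul_ne_zero hu x
  have h2 := one_sub_mul_ne_zero hv x
  have h3 := sub_ne_zero.mpr huv
  rw [div_sub_div _ _ h1 h2, div_mul_div_comm, div_mul_div_comm, mul_div_assoc',
    div_eq_div_iff (mul_ne_zero h1 h2) (mul_ne_zero h3 (mul_ne_zero h1 h2))]
  ring

lemma integrable_cross (lev : Measure ℝ) [IsFiniteMeasure lev] {u v : ℂ}
    (hu : u.im < 0) (hv : v.im < 0) (huv : u ≠ v) :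
    Integrable (fun x : ℝ =>
      (1 + (x : ℂ) ^ 2) * (u / (1 - (x : ℂ) * u) * (v / (1 - (x : ℂ) * v)))) lev := by
  simp_rw [cross_eq hu hv huv]
  exact ((kernel_integrable lev hu).sub (kernel_integrable lev hv)).const_mul _

lemma integral_cross_eq_one (c : ℝ) (lev : Measure ℝ) [IsFiniteMeasure lev] {w u v : ℂ}
    (hu : u.im < 0) (hv : v.im < 0) (huv : u ≠ v)
    (h : w - 1 / u - Rtrans c lev u = 0) (h' : w - 1 / v - Rtrans c lev v = 0) :
    ∫ x : ℝ, (1 + (x : ℂ) ^ 2) *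
      (u / (1 - (x : ℂ) * u) * (v / (1 - (x : ℂ) * v))) ∂lev = 1 := by
  simp_rw [cross_eq hu hv huv]
  rw [integral_const_mul, integral_sub (kernel_integrable lev hu) (kernel_integrable lev hv)]
  have hd : (∫ x : ℝ, (u + (x : ℂ)) / (1 - (x : ℂ) * u) ∂lev) -
      ∫ x : ℝ, (v + (x : ℂ)) / (1 - (x : ℂ) * v) ∂lev = 1 / v - 1 / u := by
    unfold Rtrans at h h'
    linear_combination h' - h
  have hu0 := ne_zero_of_im_neg hu
  have hv0 := ne_zero_of_im_neg hv
  have h3 := sub_ne_zero.mpr huv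
  rw [hd]
  field_simp

lemma im_div_one_sub_neg {u : ℂ} (hu : u.im < 0) (x : ℝ) :
    (u / (1 - (x : ℂ) * u)).im < 0 := by
  have h1 : 0 < Complex.normSq (1 - (x : ℂ) * u) :=
    Complex.normSq_pos.mpr (one_sub_mul_ne_zero hu x)
  have h2 : (u / (1 - (x : ℂ) * u)).im = u.im / Complex.normSq (1 - (x : ℂ) * u) := by
    rw [Complex.div_im, ← sub_div]
    congr 1
    simp
    ring
  rw [h2]
  exact div_neg_of_neg_of_pos hu h1

/-- `|f|² + |g|² - 2 Re (f g) = |f - conj g|²`, which is positive for `f, g ∈ ℂ₋`. -/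
lemma normSq_add_sub_pos {f g : ℂ} (hf : f.im < 0) (hg : g.im < 0) :
    0 < Complex.normSq f + Complex.normSq g - 2 * (f * g).re := by
  rw [Complex.normSq_apply, Complex.normSq_apply, Complex.mul_re]
  nlinarith [sq_nonneg (f.re - g.re), mul_pos (neg_pos.mpr (add_neg hf hg))
    (neg_pos.mpr (add_neg hf hg))]

/-- Uniqueness in `ℂ₋` of solutions of the saddle-point equation, for `w` in the closed upper
half-plane. -/
lemma saddle_unique (c : ℝ) (lev : Measure ℝ) [IsFiniteMeasure lev] {w u v : ℂ}
    (hw : 0 ≤ w.im) (hu : u.im < 0) (hv : v.im < 0)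
    (h : w - 1 / u - Rtrans c lev u = 0) (h' : w - 1 / v - Rtrans c lev v = 0) : u = v := by
  by_contra huv
  have hA := integral_normSq_le_one c lev hw hu h
  have hB := integral_normSq_le_one c lev hw hv h'
  have hC := integral_cross_eq_one c lev hu hv huv h h'
  have iA := integrable_normSq lev hu
  have iB := integrable_normSq lev hv
  have iC := integrable_cross lev hu hv huv
  have hCre := integral_re iC
  simp only [RCLike.re_to_complex] at hCre
  rw [hC, Complex.one_re] at hCre
  have iCre := iC.re
  simp only [RCLike.re_to_complex] at iCre
  set F : ℝ → ℝ := fun x =>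
    (1 + x ^ 2) * Complex.normSq (u / (1 - (x : ℂ) * u)) +
      (1 + x ^ 2) * Complex.normSq (v / (1 - (x : ℂ) * v)) -
      2 * ((1 + (x : ℂ) ^ 2) * (u / (1 - (x : ℂ) * u) * (v / (1 - (x : ℂ) * v)))).re with hF
  have hFpos : ∀ x, 0 < F x := by
    intro x
    have h1 := normSq_add_sub_pos (im_div_one_sub_neg hu x) (im_div_one_sub_neg hv x)
    have h2 : (1 + (x : ℂ) ^ 2) = ((1 + x ^ 2 : ℝ) : ℂ) := by push_cast; rfl
    have h3 : 0 < 1 + x ^ 2 := by positivity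
    simp only [hF]
    rw [h2, Complex.re_ofReal_mul]
    have := mul_pos h3 h1
    linarith
  have iF : Integrable F lev := (iA.add iB).sub (iCre.const_mul 2)
  have hFint : ∫ x, F x ∂lev ≤ 0 := by
    have : ∫ x, F x ∂lev = _ := integral_sub (iA.add iB) (iCre.const_mul 2)
    rw [this, integral_const_mul, hCre]
    have h2 := integral_add iA iB
    linarith
  have hF0 : ∫ x, F x ∂lev = 0 :=
    le_antisymm hFint (integral_nonneg fun x => (hFpos x).le)
  have hae := (integral_eq_zero_iff_of_nonneg (fun x => (hFpos x).le) iF).mp hF0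
  have hlev : lev = 0 := by
    rw [← ae_eq_bot, ← Filter.eventually_false_iff_eq_bot]
    filter_upwards [hae] with x hx
    exact (hFpos x).ne' hx
  rw [hlev, integral_zero_measure] at hC
  exact zero_ne_one hC

lemma cauchyG_im_neg (μ : Measure ℝ) [IsProbabilityMeasure μ] {z : ℂ} (hz : 0 < z.im) :
    (cauchyG μ z).im < 0 := by
  have him : ∀ t : ℝ, (z - (t : ℂ)).im = z.im := by simp
  have hne : ∀ t : ℝ, z - (t : ℂ) ≠ 0 := by
    intro t h
    have := him t
    rw [h, Complex.zero_im] at this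
    exact hz.ne this
  have hint : Integrable (fun t : ℝ => 1 / (z - (t : ℂ))) μ := by
    refine Integrable.of_bound (C := 1 / z.im) ?_ (Eventually.of_forall fun t => ?_)
    · apply Measurable.aestronglyMeasurable
      fun_prop
    · rw [norm_div, norm_one]
      gcongr
      exact (him t).symm.le.trans (Complex.im_le_norm _)
  have h1 := integral_im hint
  simp only [RCLike.im_to_complex] at h1
  have hpos : ∀ t : ℝ, 0 < -(1 / (z - (t : ℂ))).im := by
    intro t
    rw [one_div, Complex.inv_im, him, neg_div, neg_neg]
    exact div_pos hz (Complex.normSq_pos.mpr (hne t))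
  have hi : Integrable (fun t : ℝ => -(1 / (z - (t : ℂ))).im) μ := hint.im.neg
  have h2 : 0 < ∫ t : ℝ, -(1 / (z - (t : ℂ))).im ∂μ := by
    rw [integral_pos_iff_support_of_nonneg (fun t => (hpos t).le) hi]
    have : Function.support (fun t : ℝ => -(1 / (z - (t : ℂ))).im) = Set.univ :=
      Set.eq_univ_of_forall fun t => (hpos t).ne'
    rw [this]
    simp
  rw [integral_neg, h1] at h2
  unfold cauchyG
  linarith

/-- For the free infinitely divisible measure `μ` with Lévy pair `(c,Σ)`:
(i) for `z ∈ ℂ₊`, `G_μ(z)` lies in `ℂ₋` and is the unique `u ∈ ℂ₋` with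
`z − 1/u − R_{c,Σ}(u) = 0`; (ii) if `z ∈ ℝ` and `L = lim_{y→0+} G_μ(z+iy)` exists with
`Im L < 0`, then `L` is the unique such solution. -/
theorem freeID_saddle_unique (c : ℝ) (lev : Measure ℝ) [IsFiniteMeasure lev]
    (μ : Measure ℝ) [IsProbabilityMeasure μ]
    (hμ : ∀ z : ℂ, 0 < z.im → Rtrans c lev (cauchyG μ z) + 1 / cauchyG μ z = z) :
    (∀ z : ℂ, 0 < z.im →
      (cauchyG μ z).im < 0 ∧
      z - 1 / cauchyG μ z - Rtrans c lev (cauchyG μ z) = 0 ∧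
      ∀ u : ℂ, u.im < 0 → z - 1 / u - Rtrans c lev u = 0 → u = cauchyG μ z)
    ∧
    (∀ (x : ℝ) (L : ℂ),
      Tendsto (fun y : ℝ => cauchyG μ ((x : ℂ) + (y : ℂ) * Complex.I)) (𝓝[>] 0) (𝓝 L) →
      L.im < 0 →
      ((x : ℂ) - 1 / L - Rtrans c lev L = 0 ∧
        ∀ u : ℂ, u.im < 0 → (x : ℂ) - 1 / u - Rtrans c lev u = 0 → u = L)) := by
  have heq : ∀ z : ℂ, 0 < z.im → z - 1 / cauchyG μ z - Rtrans c lev (cauchyG μ z) = 0 := by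
    intro z hz
    linear_combination -(hμ z hz)
  refine ⟨fun z hz => ⟨cauchyG_im_neg μ hz, heq z hz, fun u hu h =>
    saddle_unique c lev hz.le hu (cauchyG_im_neg μ hz) h (heq z hz)⟩, fun x L hlim hL => ?_⟩
  have hLeq : (x : ℂ) - 1 / L - Rtrans c lev L = 0 := by
    have hz : Tendsto (fun y : ℝ => (x : ℂ) + (y : ℂ) * Complex.I) (𝓝[>] 0) (𝓝 (x : ℂ)) := by
      have : Continuous (fun y : ℝ => (x : ℂ) + (y : ℂ) * Complex.I) := by fun_prop
      have h0 := this.tendsto 0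
      simp only [Complex.ofReal_zero, zero_mul, add_zero] at h0
      exact h0.mono_left nhdsWithin_le_nhds
    have h1 := (hz.sub (tendsto_const_nhds.div hlim (ne_zero_of_im_neg hL) (a := (1 : ℂ)))).sub
      ((Rtrans_continuousAt c lev hL).tendsto.comp hlim)
    refine tendsto_nhds_unique h1 (tendsto_const_nhds.congr' ?_)
    filter_upwards [self_mem_nhdsWithin] with y hy
    refine (heq _ ?_).symm
    simpa using hy
  exact ⟨hLeq, fun u hu h => saddle_unique c lev (w := (x : ℂ)) (by simp) hu hL h hLeq⟩
end

section
/- Let f be entire of strip type with parameter M for some M ≥ 0, with σ ≠ 0 in its data, and set f_n(z) = f(z/√n). Then the empirical root distributions ⟦A_{n,f_n}⟧ of the Appell polynomials converge weakly to the semicircle law of variance σ², i.e., the probability measure on ℝ with Lebesgue density x ↦ √(max(4σ² − x², 0))/(2πσ²): for every bounded continuous g : ℂ → ℝ, the average of g over the complex roots of A_{n,f_n} (with multiplicity) converges to the integral of g against this semicircle law. -/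
/-!
Write `τ = |σ|` and let `p n` be the `n`-th Appell polynomial of `z ↦ f (z / √n)`. The segment
`[-2τ, 2τ]` is parametrized by `x = 2τ cos θ`, and a root `z` is written as `z = τ (ω + 1/ω)` with
`0 < |ω| ≤ 1`. Weak convergence to the semicircle law follows once the `ω` accumulate on the unit
circle and the averages of `Re (ω ^ k)`, `k ≥ 1`, tend to `-1/2` for `k = 2` and to `0` otherwise:
these are the cosine moments of the semicircle law, whose angular density is proportional to
`1 - cos 2θ`.

Both facts come from a single upper bound. As the product of genus one has minimal type
(`strip_growth`), `|f z|` is at most `K exp (ε |z|² - τ² Re (z²) / 2)`. Cauchy's estimate for the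
generating function `f_n(t) e^{yt}` on `|t| = n / τ` then gives (`appell_bound`)

`|p n (2τ cos θ)| ≤ K τⁿ exp (n (ε + cos (2θ) / 2))`.

On the other side `|2τ cos θ - z| = (τ / |ω|) |1 - ωe^{iθ}| |1 - ω̄e^{iθ}|`, and the Fourier cosine
coefficients of `log |1 - ωe^{iθ}|` are known even for `|ω| = 1` (`integral_cos_mul_log`).
Integrating the logarithm of the upper bound against `1 + s cos kθ ≥ 0`, `|s| ≤ 1`, gives
(`jensen_ineq`), after division by the degree and up to `o(1)`,

`average of (-log |ω| - (s / k) Re (ω ^ k)) ≤ s / 4` if `k = 2`, and `≤ 0` otherwise.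

No lower bound for `|p n|` is needed: as `-log |ω| ≥ 0`, the choice `s = 0` forces the average of
`-log |ω|` to `0`, and `s = ± 1` then pinches the moments (`tendsto_rootAvg_moments`).

A test function `g` is approximated on the segment by even trigonometric polynomials. Away from the
unit circle the error is dominated by a multiple of `-log |ω|` (`exists_pointwise_bound`), whose
average tends to zero. The substitution `x = 2τ cos θ` (`integral_semicircle`) identifies the limit.
-/

open Complex Filter Topology Polynomial MeasureTheory

/-- The `n`-th Appell polynomial of an entire function `f`:
`A_{n,f}(z) = ∑_{k=0}^n f^{(k)}(0)·C(n,k)·z^{n-k}`. -/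
noncomputable def appell (f : ℂ → ℂ) (n : ℕ) : Polynomial ℂ :=
  ∑ k ∈ Finset.range (n + 1),
    Polynomial.C (iteratedDeriv k f 0 * (n.choose k : ℂ)) * Polynomial.X ^ (n - k)

/-! ### Growth of strip-type functions -/

lemma norm_genus_one_le (u : ℂ) : ‖(1 - u) * Complex.exp u‖ ≤ Real.exp (‖u‖ ^ 2 / 2) := by
  have h1 : ‖1 - u‖ ≤ Real.exp (-u.re + ‖u‖ ^ 2 / 2) := by
    apply le_of_sq_le_sq _ (Real.exp_pos _).le
    rw [← Real.exp_nat_mul]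
    have : ‖1 - u‖ ^ 2 = (-2 * u.re + ‖u‖ ^ 2) + 1 := by
      rw [← Complex.normSq_eq_norm_sq, ← Complex.normSq_eq_norm_sq, Complex.normSq_apply,
        Complex.normSq_apply]
      simp
      ring
    rw [this]
    refine (Real.add_one_le_exp _).trans (le_of_eq ?_)
    congr 1
    push_cast
    ring
  rw [norm_mul, Complex.norm_exp]
  calc ‖1 - u‖ * Real.exp u.re ≤ Real.exp (-u.re + ‖u‖ ^ 2 / 2) * Real.exp u.re := by gcongr
    _ = _ := by rw [← Real.exp_add]; congr 1; ring

lemma norm_genus_one_le' (u : ℂ) : ‖(1 - u) * Complex.exp u‖ ≤ Real.exp (2 * ‖u‖) := by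
  have h1 : ‖1 - u‖ ≤ Real.exp ‖u‖ := by
    calc ‖1 - u‖ ≤ ‖(1 : ℂ)‖ + ‖u‖ := norm_sub_le _ _
      _ = ‖u‖ + 1 := by simp [add_comm]
      _ ≤ _ := Real.add_one_le_exp _
  rw [norm_mul, Complex.norm_exp, two_mul, Real.exp_add]
  gcongr
  exact Complex.re_le_norm u

lemma linear_le_sq (a ε r : ℝ) (hε : 0 < ε) : a * r ≤ ε * r ^ 2 + a ^ 2 / (4 * ε) := by
  have : ε * r ^ 2 + a ^ 2 / (4 * ε) - a * r = (2 * ε * r - a) ^ 2 / (4 * ε) := by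
    field_simp
    ring
  have : 0 ≤ (2 * ε * r - a) ^ 2 / (4 * ε) := by positivity
  linarith

/-- The product of genus one has order two and minimal type, because `∑ |α j|² < ∞` makes the type
of its tail arbitrarily small; hence the Gaussian factor alone governs the growth of `f`. -/
lemma strip_growth {f : ℂ → ℂ} {C : ℝ} {m : ℕ} {c σ : ℝ} {α : ℕ → ℂ}
    (hsum : Summable fun j => ‖α j‖ ^ 2)
    (hlim : ∀ z, Tendsto
      (fun (N : ℕ) => (C : ℂ) * z ^ m *
          Complex.exp (-(c : ℂ) * z - (σ : ℂ) ^ 2 / 2 * z ^ 2) *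
          ∏ j ∈ Finset.range N, ((1 - α j * z) * Complex.exp (α j * z))) atTop (𝓝 (f z)))
    {ε : ℝ} (hε : 0 < ε) :
    ∃ K : ℝ, 0 < K ∧ ∀ z, ‖f z‖ ≤ K * Real.exp (ε * ‖z‖ ^ 2 - σ ^ 2 / 2 * (z ^ 2).re) := by
  -- The factors before `J` are bounded by `exp (O(‖z‖))`, the tail by `exp (ε ‖z‖ ^ 2 / 2)`.
  obtain ⟨J, hJ⟩ : ∃ J : ℕ, ∑' j, ‖α (j + J)‖ ^ 2 < ε :=
    ((tendsto_sum_nat_add fun j => ‖α j‖ ^ 2).eventually_lt_const hε).exists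
  have hprod : ∀ z N, ‖∏ j ∈ Finset.range N, ((1 - α j * z) * Complex.exp (α j * z))‖ ≤
      Real.exp ((2 * ∑ j ∈ Finset.range J, ‖α j‖) * ‖z‖ + ε * ‖z‖ ^ 2 / 2) := by
    intro z N
    have key : ∀ j, ‖(1 - α j * z) * Complex.exp (α j * z)‖ ≤
        Real.exp (if j < J then 2 * ‖α j‖ * ‖z‖ else ‖α j‖ ^ 2 * ‖z‖ ^ 2 / 2) := by
      intro j
      split_ifs with h
      · refine (norm_genus_one_le' _).trans (le_of_eq ?_)
        rw [norm_mul]; congr 1; ring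
      · refine (norm_genus_one_le _).trans (le_of_eq ?_)
        rw [norm_mul]; congr 1; ring
    rw [norm_prod]
    refine (Finset.prod_le_prod (fun _ _ => norm_nonneg _) fun j _ => key j).trans ?_
    rw [← Real.exp_sum]
    apply Real.exp_le_exp.2
    have hnn : ∀ j, 0 ≤ (if j < J then 2 * ‖α j‖ * ‖z‖ else ‖α j‖ ^ 2 * ‖z‖ ^ 2 / 2) := by
      intro j
      split_ifs <;> positivity
    calc _ ≤ ∑ j ∈ Finset.range (J + N),
          (if j < J then 2 * ‖α j‖ * ‖z‖ else ‖α j‖ ^ 2 * ‖z‖ ^ 2 / 2) :=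
          Finset.sum_le_sum_of_subset_of_nonneg (Finset.range_mono (by omega))
            fun j _ _ => hnn j
      _ = ∑ j ∈ Finset.range J, 2 * ‖α j‖ * ‖z‖ +
          ∑ j ∈ Finset.range N, ‖α (j + J)‖ ^ 2 * ‖z‖ ^ 2 / 2 := by
          rw [Finset.sum_range_add]
          congr 1
          · exact Finset.sum_congr rfl fun j hj => if_pos (Finset.mem_range.1 hj)
          · refine Finset.sum_congr rfl fun j _ => ?_
            rw [if_neg (by omega), add_comm]
      _ ≤ _ := by
          rw [← Finset.sum_mul, ← Finset.mul_sum, ← Finset.sum_div, ← Finset.sum_mul]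
          gcongr
          exact (((summable_nat_add_iff J).2 hsum).sum_le_tsum _
            fun j _ => by positivity).trans hJ.le
  set S := 2 * ∑ j ∈ Finset.range J, ‖α j‖ with hS
  set a : ℝ := m + |c| + S
  refine ⟨(|C| + 1) * Real.exp (a ^ 2 / (4 * (ε / 2))), by positivity, fun z => ?_⟩
  refine le_of_tendsto (hlim z).norm (Eventually.of_forall fun N => ?_)
  rw [norm_mul, norm_mul, norm_mul, norm_pow, Complex.norm_exp, Complex.norm_real,
    Real.norm_eq_abs]
  have h1 : ‖z‖ ^ m ≤ Real.exp (m * ‖z‖) := by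
    rw [Real.exp_nat_mul]
    gcongr
    linarith [Real.add_one_le_exp ‖z‖]
  have h2 : (-(c : ℂ) * z - (σ : ℂ) ^ 2 / 2 * z ^ 2).re ≤
      |c| * ‖z‖ - σ ^ 2 / 2 * (z ^ 2).re := by
    have e1 : (-(c : ℂ) * z - (σ : ℂ) ^ 2 / 2 * z ^ 2).re =
        -(c * z.re) - σ ^ 2 / 2 * (z ^ 2).re := by
      have : (σ : ℂ) ^ 2 / 2 * z ^ 2 = ((σ ^ 2 / 2 : ℝ) : ℂ) * z ^ 2 := by push_cast; ring
      rw [this, Complex.sub_re, Complex.re_ofReal_mul]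
      simp
    rw [e1]
    have : -(c * z.re) ≤ |c| * ‖z‖ := by
      refine (neg_le_abs _).trans ?_
      rw [abs_mul]
      gcongr
      exact Complex.abs_re_le_norm z
    linarith
  calc _ ≤ (|C| + 1) * Real.exp (m * ‖z‖) *
        Real.exp (|c| * ‖z‖ - σ ^ 2 / 2 * (z ^ 2).re) *
        Real.exp (S * ‖z‖ + ε * ‖z‖ ^ 2 / 2) := by
        gcongr
        · linarith
        · exact hprod z N
    _ = (|C| + 1) * Real.exp (a * ‖z‖ + ε * ‖z‖ ^ 2 / 2 - σ ^ 2 / 2 * (z ^ 2).re) := by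
        rw [mul_assoc, mul_assoc, ← Real.exp_add, ← Real.exp_add]
        congr 2
        simp only [a]
        ring
    _ ≤ (|C| + 1) * Real.exp (a ^ 2 / (4 * (ε / 2)) +
          (ε * ‖z‖ ^ 2 - σ ^ 2 / 2 * (z ^ 2).re)) := by
        gcongr
        have := linear_le_sq a (ε / 2) ‖z‖ (by positivity)
        linarith
    _ = _ := by rw [Real.exp_add, mul_assoc]

/-- A locally uniform limit of the partial products is not identically zero: after division by
`z ^ m` the `N`-th one equals `C` at the origin, so by the maximum principle it has modulus at
least `|C|` somewhere on the unit circle, for every `N`. -/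
lemma strip_ne_zero {f : ℂ → ℂ} {C : ℝ} {m : ℕ} {c σ : ℝ} {α : ℕ → ℂ} (hC : C ≠ 0)
    (hfeq : TendstoLocallyUniformly
      (fun (N : ℕ) (z : ℂ) => (C : ℂ) * z ^ m *
          Complex.exp (-(c : ℂ) * z - (σ : ℂ) ^ 2 / 2 * z ^ 2) *
          ∏ j ∈ Finset.range N, ((1 - α j * z) * Complex.exp (α j * z)))
      f atTop) : ∃ z, f z ≠ 0 := by
  by_contra! hf
  -- On the unit circle `‖z ^ m‖ = 1`, so the partial products are still small without it.
  have hu := (tendstoLocallyUniformly_iff_forall_isCompact.1 hfeq) _ (isCompact_sphere (0 : ℂ) 1)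
  rw [Metric.tendstoUniformlyOn_iff] at hu
  obtain ⟨N, hN⟩ := (hu (|C| / 2) (by positivity)).exists
  set h : ℂ → ℂ := fun z => (C : ℂ) *
          Complex.exp (-(c : ℂ) * z - (σ : ℂ) ^ 2 / 2 * z ^ 2) *
          ∏ j ∈ Finset.range N, ((1 - α j * z) * Complex.exp (α j * z)) with hh
  have hd : Differentiable ℂ h := by
    apply Differentiable.mul (by fun_prop)
    apply Differentiable.fun_finsetProd
    intro i _
    fun_prop
  have hmax : ‖h 0‖ ≤ |C| / 2 := by
    apply Complex.norm_le_of_forall_mem_frontier_norm_le (U := Metric.ball 0 1)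
      Metric.isBounded_ball hd.diffContOnCl _ (subset_closure (by simp))
    intro z hz
    rw [frontier_ball _ one_ne_zero] at hz
    have h1 := (hN z hz).le
    rw [hf z, dist_zero_left] at h1
    have hz1 : ‖z‖ = 1 := by simpa using hz
    refine le_trans (le_of_eq ?_) h1
    simp only [hh, norm_mul, norm_pow, hz1, one_pow, mul_one]
  simp only [hh] at hmax
  simp at hmax
  have : 0 < |C| := by positivity
  linarith

lemma exists_order {f : ℂ → ℂ} (hf : Differentiable ℂ f) (h0 : ∃ z, f z ≠ 0) :
    ∃ m : ℕ, iteratedDeriv m f 0 ≠ 0 ∧ ∀ k < m, iteratedDeriv k f 0 = 0 := by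
  classical
  have h : ∃ m : ℕ, iteratedDeriv m f 0 ≠ 0 := by
    by_contra! hh
    obtain ⟨z, hz⟩ := h0
    apply hz
    rw [← Complex.taylorSeries_eq_of_entire' 0 z hf]
    simp [hh]
  exact ⟨Nat.find h, Nat.find_spec h, fun k hk => by simpa using Nat.find_min h hk⟩

/-- The generating function `F(t) e^{yt} = ∑ A_{n,F}(y) tⁿ / n!`, read off at order `n`. -/
lemma appell_eval {F : ℂ → ℂ} (hF : Differentiable ℂ F) (n : ℕ) (y : ℂ) :
    (appell F n).eval y = iteratedDeriv n (fun t => F t * Complex.exp (y * t)) 0 := by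
  have h1 : ContDiffAt ℂ n F 0 := hF.contDiff.contDiffAt
  have h2 : ContDiffAt ℂ n (fun t => Complex.exp (y * t)) 0 := by fun_prop
  rw [iteratedDeriv_fun_mul h1 h2]
  simp only [appell, Polynomial.eval_finsetSum, Polynomial.eval_mul, Polynomial.eval_C,
    Polynomial.eval_pow, Polynomial.eval_X]
  refine Finset.sum_congr rfl fun k _ => ?_
  rw [iteratedDeriv_cexp_const_mul]
  simp only [mul_zero, Complex.exp_zero, mul_one]
  ring

/-! ### Size, degree and leading coefficient of the Appell polynomials -/

/-- Stirling's upper bound, with the factor `√n` absorbed into `exp (δ n)`. -/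
lemma factorial_le_exp {δ : ℝ} (hδ : 0 < δ) :
    ∃ K : ℝ, 0 < K ∧ ∀ n : ℕ, 1 ≤ n →
      (n.factorial : ℝ) ≤ K * (n : ℝ) ^ n * Real.exp (-n + δ * n) := by
  refine ⟨Real.exp 1 * (1 / δ), by positivity, fun n hn => ?_⟩
  have hn0 : (1 : ℝ) ≤ n := by exact_mod_cast hn
  have h1 : Stirling.stirlingSeq n ≤ Stirling.stirlingSeq 1 := by
    obtain ⟨k, rfl⟩ := Nat.exists_eq_add_of_le' hn
    exact Stirling.stirlingSeq'_antitone (Nat.zero_le k)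
  rw [Stirling.stirlingSeq_one, Stirling.stirlingSeq, div_le_iff₀ (by positivity)] at h1
  have h2 : √(2 * (n : ℝ)) = √2 * √n := Real.sqrt_mul (by norm_num) _
  rw [h2, div_pow, ← Real.exp_nat_mul, mul_one] at h1
  have h3 : √(n : ℝ) ≤ 1 / δ * Real.exp (δ * n) := by
    have h4 : √(n : ℝ) ≤ n := Real.sqrt_le_iff.2 ⟨by linarith, by nlinarith⟩
    refine h4.trans ?_
    rw [one_div, ← div_eq_inv_mul, le_div_iff₀ hδ]
    linarith [Real.add_one_le_exp (δ * n)]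
  refine h1.trans ?_
  have h5 : Real.exp 1 / √2 * (√2 * √(n : ℝ) * ((n : ℝ) ^ n / Real.exp n)) =
      Real.exp 1 * √(n : ℝ) * (n : ℝ) ^ n * Real.exp (-n) := by
    rw [Real.exp_neg]
    field_simp
  rw [h5, Real.exp_add]
  calc _ ≤ Real.exp 1 * (1 / δ * Real.exp (δ * n)) * (n : ℝ) ^ n * Real.exp (-n) := by gcongr
    _ = _ := by ring

/-- Cauchy's estimate for the generating function on the circle `|t| = n / τ`. For `y = 2τ cos θ`
the points `t = (n / τ) e^{± iθ}` are the saddle points, so nothing is lost on the exponential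
scale. The logarithmic potential `log τ + cos (2θ) / 2` of the semicircle law appears. -/
lemma appell_bound {f : ℂ → ℂ} (hf : Differentiable ℂ f) {τ : ℝ} (hτ : 0 < τ)
    (hgrow : ∀ ε : ℝ, 0 < ε → ∃ K : ℝ, 0 < K ∧
      ∀ z, ‖f z‖ ≤ K * Real.exp (ε * ‖z‖ ^ 2 - τ ^ 2 / 2 * (z ^ 2).re))
    {ε : ℝ} (hε : 0 < ε) :
    ∃ K : ℝ, 0 < K ∧ ∀ n : ℕ, 1 ≤ n → ∀ θ : ℝ,
      ‖(appell (fun z => f (z / (Real.sqrt n : ℂ))) n).eval ((2 * τ * Real.cos θ : ℝ) : ℂ)‖ ≤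
        K * τ ^ n * Real.exp (n * (ε + Real.cos (2 * θ) / 2)) := by
  -- On the circle `‖t / √n‖ ^ 2 = n / τ ^ 2`, so this choice costs `exp (n ε / 2)`.
  obtain ⟨K₁, hK₁, h₁⟩ := hgrow (ε / 2 * τ ^ 2) (by positivity)
  obtain ⟨K₂, hK₂, h₂⟩ := factorial_le_exp (half_pos hε)
  refine ⟨K₁ * K₂, by positivity, fun n hn θ => ?_⟩
  have hn0 : (0 : ℝ) < n := by exact_mod_cast hn
  rw [appell_eval (by fun_prop)]
  set r : ℝ := n / τ with hr
  have hr0 : 0 < r := by positivity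
  have hbound : ∀ t ∈ Metric.sphere (0 : ℂ) r,
      ‖f (t / (Real.sqrt n : ℂ)) * Complex.exp (((2 * τ * Real.cos θ : ℝ) : ℂ) * t)‖ ≤
        K₁ * Real.exp (n * (ε / 2 + 1 + Real.cos (2 * θ) / 2)) := by
    intro t ht
    have ht' : ‖t‖ = r := by simpa using ht
    have hnorm : ‖t / (Real.sqrt n : ℂ)‖ ^ 2 = n / τ ^ 2 := by
      rw [norm_div, div_pow, ht', Complex.norm_real, Real.norm_eq_abs, sq_abs,
        Real.sq_sqrt hn0.le, hr]
      field_simp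
    have hab : t.re ^ 2 + t.im ^ 2 = (n / τ) ^ 2 := by
      rw [← hr, ← ht', ← Complex.normSq_eq_norm_sq, Complex.normSq_apply]
      ring
    have hsq : ((t / (Real.sqrt n : ℂ)) ^ 2).re = (2 * t.re ^ 2 - (n / τ) ^ 2) / n := by
      have : (t / (Real.sqrt n : ℂ)) ^ 2 = t ^ 2 / ((n : ℝ) : ℂ) := by
        rw [div_pow, ← Complex.ofReal_pow, Real.sq_sqrt hn0.le]
      rw [this, Complex.div_ofReal_re, pow_two, Complex.mul_re]
      congr 1
      linarith
    rw [norm_mul, Complex.norm_exp, Complex.re_ofReal_mul]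
    refine (mul_le_mul_of_nonneg_right (h₁ _) (Real.exp_pos _).le).trans ?_
    rw [mul_assoc, ← Real.exp_add, hnorm, hsq]
    gcongr
    -- The exponent is the saddle value minus a complete square.
    have hfin : n * (ε / 2 + 1 + Real.cos (2 * θ) / 2) -
        (ε / 2 * τ ^ 2 * (n / τ ^ 2) - τ ^ 2 / 2 * ((2 * t.re ^ 2 - (n / τ) ^ 2) / n) +
          2 * τ * Real.cos θ * t.re) = (τ * t.re - n * Real.cos θ) ^ 2 / n := by
      rw [Real.cos_two_mul]
      field_simp
      ring
    have : 0 ≤ (τ * t.re - n * Real.cos θ) ^ 2 / n := by positivity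
    linarith
  have hC := Complex.norm_iteratedDeriv_le_of_forall_mem_sphere_norm_le n hr0
    (Differentiable.diffContOnCl (by fun_prop)) hbound
  refine hC.trans ?_
  have e1 : (n : ℝ) ^ n / r ^ n = τ ^ n := by
    rw [← div_pow, hr]
    congr 1
    field_simp
  calc _ ≤ (K₂ * (n : ℝ) ^ n * Real.exp (-n + ε / 2 * n)) *
        (K₁ * Real.exp (n * (ε / 2 + 1 + Real.cos (2 * θ) / 2))) / r ^ n := by
        gcongr
        exact h₂ n hn
    _ = K₁ * K₂ * ((n : ℝ) ^ n / r ^ n) * (Real.exp (-n + ε / 2 * n) *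
        Real.exp (n * (ε / 2 + 1 + Real.cos (2 * θ) / 2))) := by ring
    _ = _ := by
        rw [e1, ← Real.exp_add]
        congr 2
        ring

lemma appell_coeff (F : ℂ → ℂ) {n k : ℕ} (hk : k ≤ n) :
    (appell F n).coeff (n - k) = iteratedDeriv k F 0 * (n.choose k : ℂ) := by
  rw [appell, Polynomial.finsetSum_coeff, Finset.sum_eq_single k]
  · rw [Polynomial.coeff_C_mul, Polynomial.coeff_X_pow, if_pos rfl, mul_one]
  · intro j hj hjk
    rw [Polynomial.coeff_C_mul, Polynomial.coeff_X_pow, if_neg, mul_zero]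
    have := Finset.mem_range.1 hj
    omega
  · intro h
    exact absurd (Finset.mem_range.2 (by omega)) h

/-- If `f` vanishes to order `m` at the origin, then `A_{n,f_n}` has degree `n - m`, and its leading
coefficient is only polynomially small in `n`. -/
lemma appell_degree_lead {f : ℂ → ℂ} (hf : Differentiable ℂ f) {m : ℕ}
    (hm : iteratedDeriv m f 0 ≠ 0) (hlt : ∀ k < m, iteratedDeriv k f 0 = 0)
    {n : ℕ} (hn : 1 ≤ n) (hmn : m ≤ n) :
    (appell (fun z => f (z / (Real.sqrt n : ℂ))) n).natDegree = n - m ∧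
    ‖iteratedDeriv m f 0‖ / √n ^ m ≤
      ‖(appell (fun z => f (z / (Real.sqrt n : ℂ))) n).leadingCoeff‖ := by
  have hn0 : (0 : ℝ) < n := by exact_mod_cast hn
  have hs : (0 : ℝ) < √n := Real.sqrt_pos.2 hn0
  set F : ℂ → ℂ := fun z => f (z / (Real.sqrt n : ℂ)) with hF
  have hder : ∀ k, iteratedDeriv k F 0 = ((Real.sqrt n : ℂ)⁻¹) ^ k * iteratedDeriv k f 0 := by
    intro k
    have e : F = fun z => f ((Real.sqrt n : ℂ)⁻¹ * z) := by
      ext z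
      rw [hF]
      simp only [div_eq_inv_mul]
    rw [e, iteratedDeriv_comp_const_mul hf.contDiff]
    simp
  have hcoef : (appell F n).coeff (n - m) ≠ 0 := by
    rw [appell_coeff F hmn, hder]
    have : (n.choose m : ℂ) ≠ 0 := by
      exact_mod_cast (Nat.choose_pos hmn).ne'
    have : (Real.sqrt n : ℂ) ≠ 0 := by exact_mod_cast hs.ne'
    positivity
  have hdeg : (appell F n).natDegree = n - m := by
    apply le_antisymm _ (Polynomial.le_natDegree_of_ne_zero hcoef)
    rw [Polynomial.natDegree_le_iff_coeff_eq_zero]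
    intro N hN
    by_cases hNn : N ≤ n
    · obtain ⟨k, hk⟩ : ∃ k, k = n - N := ⟨_, rfl⟩
      have : N = n - k := by omega
      rw [this, appell_coeff F (by omega), hder, hlt k (by omega)]
      simp
    · rw [appell, Polynomial.finsetSum_coeff]
      refine Finset.sum_eq_zero fun j _ => ?_
      rw [Polynomial.coeff_C_mul, Polynomial.coeff_X_pow, if_neg (by omega), mul_zero]
  refine ⟨hdeg, ?_⟩
  rw [Polynomial.leadingCoeff, hdeg, appell_coeff F hmn, hder]
  rw [norm_mul, norm_mul, norm_pow, norm_inv, Complex.norm_real, Real.norm_of_nonneg hs.le,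
    Complex.norm_natCast, inv_pow]
  have : (1 : ℝ) ≤ n.choose m := by exact_mod_cast Nat.choose_pos hmn
  rw [div_eq_inv_mul]
  exact le_mul_of_one_le_right (by positivity) this

/-! ### Fourier coefficients of the logarithmic kernel -/

lemma integral_cos_int (n : ℤ) (hn : n ≠ 0) :
    ∫ θ in (0 : ℝ)..2 * Real.pi, Real.cos (n * θ) = 0 := by
  have h : (n : ℝ) ≠ 0 := by exact_mod_cast hn
  rw [intervalIntegral.integral_comp_mul_left (fun x => Real.cos x) h, integral_cos]
  have : (n : ℝ) * (2 * Real.pi) = ((2 * n : ℤ) : ℝ) * Real.pi := by push_cast; ring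
  rw [this, Real.sin_int_mul_pi]
  simp

lemma integral_sin_int (n : ℤ) :
    ∫ θ in (0 : ℝ)..2 * Real.pi, Real.sin (n * θ) = 0 := by
  by_cases hn : n = 0
  · simp [hn]
  have h : (n : ℝ) ≠ 0 := by exact_mod_cast hn
  rw [intervalIntegral.integral_comp_mul_left (fun x => Real.sin x) h, integral_sin,
    Real.cos_int_mul_two_pi]
  simp

lemma integral_cos_mul_cos (j k : ℕ) (hj : j ≠ 0) :
    ∫ θ in (0 : ℝ)..2 * Real.pi, Real.cos (j * θ) * Real.cos (k * θ) =
      if j = k then Real.pi else 0 := by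
  have e : ∀ θ : ℝ, Real.cos (j * θ) * Real.cos (k * θ) =
      Real.cos (((j : ℤ) - k : ℤ) * θ) / 2 + Real.cos (((j : ℤ) + k : ℤ) * θ) / 2 := by
    intro θ
    push_cast
    rw [sub_mul, add_mul, Real.cos_add, Real.cos_sub]
    ring
  simp_rw [e]
  rw [intervalIntegral.integral_add (Continuous.intervalIntegrable (by fun_prop) _ _)
    (Continuous.intervalIntegrable (by fun_prop) _ _), intervalIntegral.integral_div,
    intervalIntegral.integral_div, integral_cos_int ((j : ℤ) + k) (by omega)]
  split_ifs with h
  · simp [h]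
  · rw [integral_cos_int _ (by omega)]
    simp

lemma integral_sin_mul_cos (j k : ℕ) :
    ∫ θ in (0 : ℝ)..2 * Real.pi, Real.sin (j * θ) * Real.cos (k * θ) = 0 := by
  have e : ∀ θ : ℝ, Real.sin (j * θ) * Real.cos (k * θ) =
      Real.sin (((j : ℤ) - k : ℤ) * θ) / 2 + Real.sin (((j : ℤ) + k : ℤ) * θ) / 2 := by
    intro θ
    push_cast
    rw [sub_mul, add_mul, Real.sin_add, Real.sin_sub]
    ring
  simp_rw [e]
  rw [intervalIntegral.integral_add (Continuous.intervalIntegrable (by fun_prop) _ _)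
    (Continuous.intervalIntegrable (by fun_prop) _ _), intervalIntegral.integral_div,
    intervalIntegral.integral_div, integral_sin_int, integral_sin_int]
  simp

lemma re_mul_exp_pow (ω : ℂ) (j : ℕ) (θ : ℝ) :
    ((ω * Complex.exp (θ * I)) ^ j).re =
      (ω ^ j).re * Real.cos (j * θ) - (ω ^ j).im * Real.sin (j * θ) := by
  rw [mul_pow, ← Complex.exp_nat_mul]
  have : (j : ℂ) * (θ * I) = ((j * θ : ℝ) : ℂ) * I := by push_cast; ring
  rw [this, Complex.mul_re, Complex.exp_ofReal_mul_I_re, Complex.exp_ofReal_mul_I_im]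

lemma one_sub_mul_exp_ne_zero_ae (ω : ℂ) : ∀ᵐ θ : ℝ, 1 - ω * Complex.exp (θ * I) ≠ 0 := by
  have hc : {θ : ℝ | ¬ (1 - ω * Complex.exp (θ * I) ≠ 0)}.Countable := by
    by_cases h : ∃ θ₀ : ℝ, 1 - ω * Complex.exp (θ₀ * I) = 0
    · obtain ⟨θ₀, h₀⟩ := h
      refine (Set.countable_range fun n : ℤ => θ₀ + n * (2 * Real.pi)).mono ?_
      intro θ hθ
      simp only [ne_eq, not_not, Set.mem_ofPred_eq] at hθ
      have hω : ω ≠ 0 := by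
        rintro rfl
        simp at h₀
      have h1 : Complex.exp (θ * I) = Complex.exp (θ₀ * I) := by
        apply mul_left_cancel₀ hω
        linear_combination h₀ - hθ
      obtain ⟨n, hn⟩ := Complex.exp_eq_exp_iff_exists_int.1 h1
      refine ⟨n, ?_⟩
      have h2 : (θ : ℂ) = θ₀ + n * (2 * Real.pi) := by
        apply mul_right_cancel₀ Complex.I_ne_zero
        rw [hn]
        ring
      have h3 : ((θ₀ + n * (2 * Real.pi) : ℝ) : ℂ) = (θ : ℂ) := by
        rw [h2]; push_cast; ring
      exact_mod_cast h3
    · push Not at h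
      convert Set.countable_empty
      ext θ
      simp [h θ]
  exact hc.measure_zero volume

lemma intervalIntegrable_log_kernel (ω : ℂ) (a b : ℝ) :
    IntervalIntegrable (fun θ : ℝ => Real.log ‖1 - ω * Complex.exp (θ * I)‖) volume a b := by
  apply MeromorphicOn.intervalIntegrable_log_norm (f := fun θ : ℝ => 1 - ω * Complex.exp (θ * I))
  intro x _
  apply AnalyticAt.meromorphicAt
  have h1 : AnalyticAt ℝ (fun θ : ℝ => (θ : ℂ)) x := Complex.ofRealCLM.analyticAt x
  have h2 : AnalyticAt ℝ Complex.exp ((x : ℂ) * I) :=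
    (Complex.differentiable_exp.analyticAt _).restrictScalars
  exact analyticAt_const.sub (analyticAt_const.mul
    (AnalyticAt.fun_comp (g := Complex.exp) h2 (h1.mul analyticAt_const)))

/-- Termwise integration of `log |1 - ωe^{iθ}| = -∑ Re ((ωe^{iθ})ʲ) / j`. For `k = 0` both sides
vanish, the right one because division by zero gives zero. -/
lemma integral_cos_mul_log_lt {ω : ℂ} (hω : ‖ω‖ < 1) (k : ℕ) :
    ∫ θ in (0 : ℝ)..2 * Real.pi, Real.cos (k * θ) * Real.log ‖1 - ω * Complex.exp (θ * I)‖ =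
      -(Real.pi / k) * (ω ^ k).re := by
  let F : ℕ → C(ℝ, ℝ) := fun j =>
    ⟨fun θ => Real.cos (k * θ) * -(((ω * Complex.exp (θ * I)) ^ j).re / j), by fun_prop⟩
  have hnorm : ∀ θ : ℝ, ‖ω * Complex.exp (θ * I)‖ = ‖ω‖ := by
    intro θ
    rw [norm_mul, Complex.norm_exp_ofReal_mul_I, mul_one]
  have hb : ∀ j (θ : ℝ), ‖F j θ‖ ≤ ‖ω‖ ^ j := by
    intro j θ
    simp only [F, ContinuousMap.coe_mk, norm_mul, norm_neg, norm_div, Real.norm_eq_abs,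
      Nat.abs_cast]
    have h1 : |Real.cos (k * θ)| ≤ 1 := Real.abs_cos_le_one _
    have h2 : |((ω * Complex.exp (θ * I)) ^ j).re| ≤ ‖ω‖ ^ j := by
      refine (Complex.abs_re_le_norm _).trans (le_of_eq ?_)
      rw [norm_pow, hnorm]
    have h3 : |((ω * Complex.exp (θ * I)) ^ j).re| / j ≤ ‖ω‖ ^ j := by
      rcases Nat.eq_zero_or_pos j with rfl | hj
      · simp
      · refine (div_le_self (abs_nonneg _) ?_).trans h2
        exact_mod_cast hj
    calc _ ≤ 1 * (‖ω‖ ^ j) := by gcongr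
      _ = _ := one_mul _
  have hs := intervalIntegral.hasSum_intervalIntegral_of_summable_norm
    (a := 0) (b := 2 * Real.pi) (f := F) (by
      refine Summable.of_nonneg_of_le (fun _ => norm_nonneg _) (fun j => ?_)
        (summable_geometric_of_lt_one (norm_nonneg ω) hω)
      rw [ContinuousMap.norm_le _ (by positivity)]
      intro x
      exact hb j x)
  have hint : ∀ j, ∫ θ in (0 : ℝ)..2 * Real.pi, F j θ =
      if j = k then -(Real.pi / k) * (ω ^ k).re else 0 := by
    intro j
    rcases Nat.eq_zero_or_pos j with rfl | hj
    · simp only [F, ContinuousMap.coe_mk, Nat.cast_zero, div_zero, neg_zero, mul_zero,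
        intervalIntegral.integral_zero]
      split_ifs with h
      · simp [← h]
      · rfl
    have e : ∀ θ : ℝ, F j θ = -((ω ^ j).re / j) * (Real.cos (j * θ) * Real.cos (k * θ)) +
        (ω ^ j).im / j * (Real.sin (j * θ) * Real.cos (k * θ)) := by
      intro θ
      simp only [F, ContinuousMap.coe_mk, re_mul_exp_pow]
      ring
    simp_rw [e]
    rw [intervalIntegral.integral_add (Continuous.intervalIntegrable (by fun_prop) _ _)
      (Continuous.intervalIntegrable (by fun_prop) _ _), intervalIntegral.integral_const_mul,
      intervalIntegral.integral_const_mul, integral_cos_mul_cos j k hj.ne',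
      integral_sin_mul_cos]
    split_ifs with h
    · subst h; ring
    · simp
  have htsum : ∀ θ : ℝ, ∑' j, F j θ =
      Real.cos (k * θ) * Real.log ‖1 - ω * Complex.exp (θ * I)‖ := by
    intro θ
    have h1 := Complex.hasSum_taylorSeries_neg_log (z := ω * Complex.exp (θ * I))
      (by rw [hnorm]; exact hω)
    have h2 := (Complex.hasSum_re h1).neg.mul_left (Real.cos (k * θ))
    rw [Complex.neg_re, neg_neg, Complex.log_re] at h2
    rw [← h2.tsum_eq]
    refine tsum_congr fun j => ?_
    simp only [F, ContinuousMap.coe_mk, Complex.div_natCast_re]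
  simp_rw [htsum, hint] at hs
  exact (hs.unique (hasSum_ite_eq k _))

/-- Fourier cosine coefficients of `θ ↦ log |1 - ωe^{iθ}|` on the closed disc. The boundary case
follows from `rω → ω` by dominated convergence, using `|1 - z| ≤ 2 |1 - rz|` for `|z| ≤ 1`. For
`k = 0` the right side is zero, as division by zero gives zero. -/
lemma integral_cos_mul_log {ω : ℂ} (hω : ‖ω‖ ≤ 1) (k : ℕ) :
    ∫ θ in (0 : ℝ)..2 * Real.pi, Real.cos (k * θ) * Real.log ‖1 - ω * Complex.exp (θ * I)‖ =
      -(Real.pi / k) * (ω ^ k).re := by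
  have hnorm : ∀ θ : ℝ, ‖ω * Complex.exp (θ * I)‖ ≤ 1 := by
    intro θ
    rwa [norm_mul, Complex.norm_exp_ofReal_mul_I, mul_one]
  -- Approach `ω` radially from inside the disc.
  have hev : ∀ᶠ r : ℝ in 𝓝[<] 1, 0 < r ∧ r < 1 := by
    filter_upwards [Ioo_mem_nhdsLT (show (0 : ℝ) < 1 by norm_num)] with r hr using hr
  have hL : Tendsto (fun r : ℝ => ∫ θ in (0 : ℝ)..2 * Real.pi,
      Real.cos (k * θ) * Real.log ‖1 - (r * ω) * Complex.exp (θ * I)‖) (𝓝[<] 1)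
      (𝓝 (∫ θ in (0 : ℝ)..2 * Real.pi,
        Real.cos (k * θ) * Real.log ‖1 - ω * Complex.exp (θ * I)‖)) := by
    apply intervalIntegral.tendsto_integral_filter_of_dominated_convergence
      (fun θ => |Real.log ‖1 - ω * Complex.exp (θ * I)‖| + Real.log 2)
    · refine Eventually.of_forall fun r => Measurable.aestronglyMeasurable (by fun_prop)
    · filter_upwards [hev] with r hr
      filter_upwards [one_sub_mul_exp_ne_zero_ae ω] with θ hθ _
      set z := ω * Complex.exp (θ * I) with hz
      have hz1 : ‖z‖ ≤ 1 := hnorm θ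
      have hpos : 0 < ‖1 - z‖ := norm_pos_iff.2 hθ
      have hrz : (r : ℂ) * ω * Complex.exp (θ * I) = r * z := by rw [hz]; ring
      rw [hrz, norm_mul, Real.norm_eq_abs, Real.norm_eq_abs]
      have hnr : ‖(r : ℂ) * z‖ ≤ r := by
        rw [norm_mul, Complex.norm_real, Real.norm_of_nonneg hr.1.le]
        exact mul_le_of_le_one_right hr.1.le hz1
      have h1 : 1 - r ≤ ‖1 - (r : ℂ) * z‖ := by
        have := norm_sub_norm_le (1 : ℂ) ((r : ℂ) * z)
        rw [norm_one] at this
        linarith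
      have h2 : ‖1 - z‖ ≤ 2 * ‖1 - (r : ℂ) * z‖ := by
        have e : 1 - z = (1 - (r : ℂ) * z) - ((1 - r : ℝ) : ℂ) * z := by push_cast; ring
        have h3 : ‖((1 - r : ℝ) : ℂ) * z‖ ≤ 1 - r := by
          rw [norm_mul, Complex.norm_real, Real.norm_of_nonneg (by linarith [hr.2])]
          exact mul_le_of_le_one_right (by linarith [hr.2]) hz1
        rw [e]
        refine (norm_sub_le _ _).trans ?_
        linarith
      have h4 : ‖1 - (r : ℂ) * z‖ ≤ 2 := by
        refine (norm_sub_le _ _).trans ?_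
        rw [norm_one]
        linarith [hr.2]
      have hpos' : 0 < ‖1 - (r : ℂ) * z‖ := by linarith [hr.2]
      have h5 : Real.log ‖1 - (r : ℂ) * z‖ ≤ Real.log 2 := Real.log_le_log hpos' h4
      have h6 : Real.log ‖1 - z‖ ≤ Real.log 2 + Real.log ‖1 - (r : ℂ) * z‖ := by
        rw [← Real.log_mul two_ne_zero hpos'.ne']
        exact Real.log_le_log hpos h2
      have h7 : |Real.log ‖1 - (r : ℂ) * z‖| ≤ |Real.log ‖1 - z‖| + Real.log 2 := by
        rw [abs_le]
        constructor
        · linarith [neg_abs_le (Real.log ‖1 - z‖)]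
        · linarith [abs_nonneg (Real.log ‖1 - z‖)]
      calc _ ≤ 1 * |Real.log ‖1 - (r : ℂ) * z‖| := by
            gcongr
            exact Real.abs_cos_le_one _
        _ ≤ _ := by rw [one_mul]; exact h7
    · exact (intervalIntegrable_log_kernel ω _ _).abs.add intervalIntegrable_const
    · filter_upwards [one_sub_mul_exp_ne_zero_ae ω] with θ hθ _
      apply Tendsto.const_mul
      have hc : ContinuousAt
          (fun r : ℝ => Real.log ‖1 - (r : ℂ) * ω * Complex.exp (θ * I)‖) 1 := by
        apply ContinuousAt.log
        · fun_prop
        · simpa using hθ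
      have := hc.tendsto.mono_left (nhdsWithin_le_nhds (s := Set.Iio 1))
      simpa using this
  have hR : Tendsto (fun r : ℝ => ∫ θ in (0 : ℝ)..2 * Real.pi,
      Real.cos (k * θ) * Real.log ‖1 - (r * ω) * Complex.exp (θ * I)‖) (𝓝[<] 1)
      (𝓝 (-(Real.pi / k) * (ω ^ k).re)) := by
    have h1 : Tendsto (fun r : ℝ => -(Real.pi / k) * (((r : ℂ) * ω) ^ k).re) (𝓝[<] 1)
        (𝓝 (-(Real.pi / k) * (((1 : ℝ) * ω : ℂ) ^ k).re)) := by
      apply Tendsto.mono_left _ nhdsWithin_le_nhds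
      apply Continuous.tendsto
      fun_prop
    rw [Complex.ofReal_one, one_mul] at h1
    refine h1.congr' ?_
    filter_upwards [hev] with r hr
    rw [integral_cos_mul_log_lt]
    rw [norm_mul, Complex.norm_real, Real.norm_of_nonneg hr.1.le]
    calc r * ‖ω‖ ≤ r * 1 := by gcongr; exact hr.1.le
      _ < 1 := by linarith [hr.2]
  exact tendsto_nhds_unique hL hR

/-! ### A weighted Jensen inequality on the segment -/

/-- A choice `om` of inverse of the Joukowski map `ω ↦ τ (ω + 1/ω)` with values in the punctured
closed unit disc. -/
lemma exists_joukowski {τ : ℝ} (hτ : 0 < τ) :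
    ∃ om : ℂ → ℂ, ∀ z, om z ≠ 0 ∧ ‖om z‖ ≤ 1 ∧ z = τ * (om z + (om z)⁻¹) := by
  have h : ∀ z : ℂ, ∃ w : ℂ, w ≠ 0 ∧ ‖w‖ ≤ 1 ∧ z = τ * (w + w⁻¹) := by
    intro z
    have hτ' : (τ : ℂ) ≠ 0 := by exact_mod_cast hτ.ne'
    obtain ⟨s, hs⟩ := IsAlgClosed.exists_pow_nat_eq ((z / τ) ^ 2 - 4) (n := 2) (by norm_num)
    set w : ℂ := (z / τ + s) / 2 with hw
    have hq : w * w - (z / τ) * w + 1 = 0 := by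
      rw [hw]
      linear_combination hs / 4
    have hw0 : w ≠ 0 := by
      intro h0
      rw [h0] at hq
      simp at hq
    have hz : z = τ * (w + w⁻¹) := by
      have e : z / τ = w + w⁻¹ := by
        clear_value w
        have : (z / τ) * w = (w + w⁻¹) * w := by
          rw [add_mul, inv_mul_cancel₀ hw0]
          linear_combination -hq
        exact mul_right_cancel₀ hw0 this
      rw [← e, mul_div_cancel₀ _ hτ']
    by_cases h1 : ‖w‖ ≤ 1
    · exact ⟨w, hw0, h1, hz⟩
    · refine ⟨w⁻¹, inv_ne_zero hw0, ?_, ?_⟩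
      · rw [norm_inv]
        exact inv_le_one_of_one_le₀ (not_le.1 h1).le
      · rw [inv_inv, add_comm]; exact hz
  choose om hom using h
  exact ⟨om, hom⟩

lemma norm_sub_joukowski {τ : ℝ} (hτ : 0 < τ) {ω z : ℂ} (h0 : ω ≠ 0)
    (hz : z = τ * (ω + ω⁻¹)) (θ : ℝ) :
    ‖((2 * τ * Real.cos θ : ℝ) : ℂ) - z‖ = τ / ‖ω‖ * ‖1 - ω * Complex.exp (θ * I)‖ *
      ‖1 - (starRingEnd ℂ) ω * Complex.exp (θ * I)‖ := by
  have h1 : ‖1 - (starRingEnd ℂ) ω * Complex.exp (θ * I)‖ =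
      ‖1 - ω * Complex.exp (-(θ * I))‖ := by
    rw [← Complex.norm_conj]
    congr 1
    simp [← Complex.exp_conj]
  rw [h1]
  have h2 : ((2 * τ * Real.cos θ : ℝ) : ℂ) - z = -((τ : ℂ) / ω) *
      (1 - ω * Complex.exp (θ * I)) * (1 - ω * Complex.exp (-(θ * I))) := by
    have e : Complex.exp (θ * I) * Complex.exp (-(θ * I)) = 1 := by
      rw [← Complex.exp_add]; simp
    have ec : (2 : ℂ) * Complex.cos θ = Complex.exp (θ * I) + Complex.exp (-(θ * I)) := by
      rw [Complex.cos, neg_mul]; ring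
    rw [hz]
    push_cast
    have : (2 : ℂ) * τ * Complex.cos θ = τ * (2 * Complex.cos θ) := by ring
    rw [this, ec]
    field_simp
    linear_combination (τ : ℂ) * ω ^ 2 * e
  rw [h2, norm_mul, norm_mul, norm_neg, norm_div, Complex.norm_real, Real.norm_of_nonneg hτ.le]

/-- The logarithm of `‖∏_{z ∈ S} (2τ cos θ - z)‖`, expanded through the inverse Joukowski
coordinates `om z` of the roots. -/
noncomputable def logSum (τ : ℝ) (om : ℂ → ℂ) (S : Multiset ℂ) (θ : ℝ) : ℝ :=
  (S.map fun z => Real.log τ - Real.log ‖om z‖ +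
    Real.log ‖1 - om z * Complex.exp (θ * I)‖ +
    Real.log ‖1 - (starRingEnd ℂ) (om z) * Complex.exp (θ * I)‖).sum

/-- Exceptional angles are those at which `2τ cos θ` is a root. -/
lemma logSum_ae {τ : ℝ} (hτ : 0 < τ) {om : ℂ → ℂ}
    (hom : ∀ z, om z ≠ 0 ∧ ‖om z‖ ≤ 1 ∧ z = τ * (om z + (om z)⁻¹)) (S : Multiset ℂ) :
    ∀ᵐ θ : ℝ, (S.map fun z => ((2 * τ * Real.cos θ : ℝ) : ℂ) - z).prod ≠ 0 ∧
      Real.log ‖(S.map fun z => ((2 * τ * Real.cos θ : ℝ) : ℂ) - z).prod‖ =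
        logSum τ om S θ := by
  induction S using Multiset.induction with
  | empty => simp [logSum]
  | cons a S ih =>
    filter_upwards [ih, one_sub_mul_exp_ne_zero_ae (om a),
      one_sub_mul_exp_ne_zero_ae ((starRingEnd ℂ) (om a))] with θ h1 h2 h3
    obtain ⟨ha0, -, haz⟩ := hom a
    have hn := norm_sub_joukowski hτ ha0 haz θ
    have p1 : ‖om a‖ ≠ 0 := norm_ne_zero_iff.2 ha0
    have p2 := norm_ne_zero_iff.2 h2
    have p3 := norm_ne_zero_iff.2 h3
    have hne : ((2 * τ * Real.cos θ : ℝ) : ℂ) - a ≠ 0 := by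
      rw [← norm_ne_zero_iff, hn]
      positivity
    rw [Multiset.map_cons, Multiset.prod_cons]
    refine ⟨mul_ne_zero hne h1.1, ?_⟩
    rw [norm_mul, Real.log_mul (norm_ne_zero_iff.2 hne) (norm_ne_zero_iff.2 h1.1), h1.2, hn,
      Real.log_mul (by positivity) p3, Real.log_mul (by positivity) p2,
      Real.log_div hτ.ne' p1]
    simp [logSum]

lemma logSum_intervalIntegrable (τ : ℝ) (om : ℂ → ℂ) (S : Multiset ℂ) (a b : ℝ) :
    IntervalIntegrable (logSum τ om S) volume a b := by
  induction S using Multiset.induction with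
  | empty =>
    have : logSum τ om 0 = fun _ => 0 := by ext; simp [logSum]
    rw [this]
    exact intervalIntegrable_const
  | cons z S ih =>
    have : logSum τ om (z ::ₘ S) = fun θ : ℝ => (Real.log τ - Real.log ‖om z‖ +
      Real.log ‖1 - om z * Complex.exp (θ * I)‖ +
      Real.log ‖1 - (starRingEnd ℂ) (om z) * Complex.exp (θ * I)‖) + logSum τ om S θ := by
      ext; simp [logSum]
    rw [this]
    exact ((intervalIntegrable_const.add (intervalIntegrable_log_kernel _ _ _)).add
      (intervalIntegrable_log_kernel _ _ _)).add ih

lemma integral_weight_mul_log {ω : ℂ} (hω : ‖ω‖ ≤ 1) (k : ℕ) (s : ℝ) :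
    ∫ θ in (0 : ℝ)..2 * Real.pi, (1 + s * Real.cos (k * θ)) *
      Real.log ‖1 - ω * Complex.exp (θ * I)‖ = -(Real.pi * s / k) * (ω ^ k).re := by
  have h0 := integral_cos_mul_log hω 0
  have hk := integral_cos_mul_log hω k
  have hi := intervalIntegrable_log_kernel ω 0 (2 * Real.pi)
  have e : ∀ θ : ℝ, (1 + s * Real.cos (k * θ)) * Real.log ‖1 - ω * Complex.exp (θ * I)‖ =
      Real.cos ((0 : ℕ) * θ) * Real.log ‖1 - ω * Complex.exp (θ * I)‖ +
      s * (Real.cos (k * θ) * Real.log ‖1 - ω * Complex.exp (θ * I)‖) := by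
    intro θ
    rw [Nat.cast_zero, zero_mul, Real.cos_zero]
    ring
  simp_rw [e]
  rw [intervalIntegral.integral_add (hi.continuousOn_mul (by fun_prop))
    ((hi.continuousOn_mul (by fun_prop)).const_mul s), intervalIntegral.integral_const_mul, h0, hk]
  simp
  ring

lemma integral_weight (k : ℕ) (hk : k ≠ 0) (s : ℝ) :
    ∫ θ in (0 : ℝ)..2 * Real.pi, (1 + s * Real.cos (k * θ)) = 2 * Real.pi := by
  rw [intervalIntegral.integral_add intervalIntegrable_const
    (Continuous.intervalIntegrable (by fun_prop) _ _), intervalIntegral.integral_const_mul]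
  have := integral_cos_int k (by exact_mod_cast hk)
  rw [Int.cast_natCast] at this
  rw [this]
  simp

lemma integral_weight_mul_logSum {τ : ℝ} {om : ℂ → ℂ} (hom : ∀ z, ‖om z‖ ≤ 1)
    (S : Multiset ℂ) (k : ℕ) (hk : k ≠ 0) (s : ℝ) :
    ∫ θ in (0 : ℝ)..2 * Real.pi, (1 + s * Real.cos (k * θ)) * logSum τ om S θ =
      2 * Real.pi * (S.map fun z => Real.log τ +
        (-Real.log ‖om z‖ - s / k * (om z ^ k).re)).sum := by
  induction S using Multiset.induction with
  | empty => simp [logSum]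
  | cons z S ih =>
    have hz := hom z
    have hz' : ‖(starRingEnd ℂ) (om z)‖ ≤ 1 := by rwa [Complex.norm_conj]
    have e : ∀ θ : ℝ, (1 + s * Real.cos (k * θ)) * logSum τ om (z ::ₘ S) θ =
        (((1 + s * Real.cos (k * θ)) * (Real.log τ - Real.log ‖om z‖) +
        (1 + s * Real.cos (k * θ)) * Real.log ‖1 - om z * Complex.exp (θ * I)‖) +
        (1 + s * Real.cos (k * θ)) *
          Real.log ‖1 - (starRingEnd ℂ) (om z) * Complex.exp (θ * I)‖) +
        (1 + s * Real.cos (k * θ)) * logSum τ om S θ := by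
      intro θ
      simp only [logSum, Multiset.map_cons, Multiset.sum_cons]
      ring
    have i1 : IntervalIntegrable (fun θ : ℝ => (1 + s * Real.cos (k * θ)) *
        (Real.log τ - Real.log ‖om z‖)) volume 0 (2 * Real.pi) :=
      Continuous.intervalIntegrable (by fun_prop) _ _
    have i2 := fun ω => (intervalIntegrable_log_kernel ω 0 (2 * Real.pi)).continuousOn_mul
      (g := fun θ : ℝ => 1 + s * Real.cos (k * θ)) (by fun_prop)
    have i3 := (logSum_intervalIntegrable τ om S 0 (2 * Real.pi)).continuousOn_mul
      (g := fun θ : ℝ => 1 + s * Real.cos (k * θ)) (by fun_prop)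
    simp_rw [e]
    rw [intervalIntegral.integral_add ((i1.add (i2 _)).add (i2 _)) i3,
      intervalIntegral.integral_add (i1.add (i2 _)) (i2 _),
      intervalIntegral.integral_add i1 (i2 _), intervalIntegral.integral_mul_const,
      integral_weight k hk, integral_weight_mul_log hz, integral_weight_mul_log hz', ih,
      Multiset.map_cons, Multiset.sum_cons, ← map_pow, Complex.conj_re]
    field_simp
    ring

/-- An upper bound for `|p|` on `[-2τ, 2τ]`, averaged against the nonnegative weight `1 + s cos kθ`.
Since `∫ cos 2θ cos kθ dθ` vanishes unless `k = 2`, only that frequency feels the term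
`N cos (2θ) / 2`. -/
lemma jensen_ineq {p : ℂ[X]} (hp : p ≠ 0) {τ : ℝ} (hτ : 0 < τ) {om : ℂ → ℂ}
    (hom : ∀ z, om z ≠ 0 ∧ ‖om z‖ ≤ 1 ∧ z = τ * (om z + (om z)⁻¹)) {B N : ℝ} (hB : 0 < B)
    (hbd : ∀ θ : ℝ, ‖p.eval ((2 * τ * Real.cos θ : ℝ) : ℂ)‖ ≤
      B * Real.exp (N * (Real.cos (2 * θ) / 2)))
    {k : ℕ} (hk : k ≠ 0) {s : ℝ} (hs : |s| ≤ 1) :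
    Real.log ‖p.leadingCoeff‖ + p.natDegree * Real.log τ +
      (p.roots.map fun z => -Real.log ‖om z‖ - s / k * (om z ^ k).re).sum ≤
      Real.log B + N * (if k = 2 then s / 4 else 0) := by
  have hl : p.leadingCoeff ≠ 0 := Polynomial.leadingCoeff_ne_zero.2 hp
  have hsp : p.Splits := IsAlgClosed.splits p
  have hcard : p.roots.card = p.natDegree := hsp.natDegree_eq_card_roots.symm
  have heval : ∀ y, p.eval y = p.leadingCoeff * (p.roots.map fun z => y - z).prod := by
    intro y
    conv_lhs => rw [hsp.eq_prod_roots]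
    rw [Polynomial.eval_mul, Polynomial.eval_C, Polynomial.eval_multiset_prod, Multiset.map_map]
    simp
  have hae : ∀ᵐ θ : ℝ, (1 + s * Real.cos (k * θ)) *
      (Real.log ‖p.leadingCoeff‖) + (1 + s * Real.cos (k * θ)) * logSum τ om p.roots θ ≤
      (1 + s * Real.cos (k * θ)) * Real.log B +
        N / 2 * (Real.cos (2 * θ) + s * (Real.cos ((2 : ℕ) * θ) * Real.cos (k * θ))) := by
    filter_upwards [logSum_ae hτ hom p.roots] with θ hθ
    have hw : 0 ≤ 1 + s * Real.cos (k * θ) := by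
      have : |s * Real.cos (k * θ)| ≤ 1 := by
        rw [abs_mul]
        exact mul_le_one₀ hs (abs_nonneg _) (Real.abs_cos_le_one _)
      linarith [neg_abs_le (s * Real.cos (k * θ))]
    have h1 := hbd θ
    rw [heval, norm_mul] at h1
    have h2 := Real.log_le_log
      (mul_pos (norm_pos_iff.2 hl) (norm_pos_iff.2 hθ.1)) h1
    rw [Real.log_mul (norm_ne_zero_iff.2 hl) (norm_ne_zero_iff.2 hθ.1), hθ.2,
      Real.log_mul hB.ne' (Real.exp_pos _).ne', Real.log_exp] at h2
    have h3 := mul_le_mul_of_nonneg_left h2 hw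
    push_cast
    linarith
  have i1 : ∀ c : ℝ, IntervalIntegrable (fun θ : ℝ => (1 + s * Real.cos (k * θ)) * c)
      volume 0 (2 * Real.pi) := fun c => Continuous.intervalIntegrable (by fun_prop) _ _
  have i3 := (logSum_intervalIntegrable τ om p.roots 0 (2 * Real.pi)).continuousOn_mul
      (g := fun θ : ℝ => 1 + s * Real.cos (k * θ)) (by fun_prop)
  have i4 : IntervalIntegrable (fun θ : ℝ =>
      N / 2 * (Real.cos (2 * θ) + s * (Real.cos ((2 : ℕ) * θ) * Real.cos (k * θ))))
      volume 0 (2 * Real.pi) := Continuous.intervalIntegrable (by fun_prop) _ _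
  have hint := intervalIntegral.integral_mono_ae (by positivity) ((i1 _).add i3)
    ((i1 _).add i4) hae
  rw [intervalIntegral.integral_add (i1 _) i3, intervalIntegral.integral_add (i1 _) i4,
    intervalIntegral.integral_mul_const, intervalIntegral.integral_mul_const,
    integral_weight k hk, integral_weight_mul_logSum (fun z => (hom z).2.1) _ k hk,
    intervalIntegral.integral_const_mul, intervalIntegral.integral_add
      (Continuous.intervalIntegrable (by fun_prop) _ _)
      (Continuous.intervalIntegrable (by fun_prop) _ _),
    intervalIntegral.integral_const_mul, integral_cos_mul_cos 2 k two_ne_zero] at hint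
  have hc2 := integral_cos_int 2 two_ne_zero
  rw [Int.cast_ofNat] at hc2
  rw [hc2, Multiset.sum_map_add, Multiset.map_const', Multiset.sum_replicate, hcard,
    nsmul_eq_mul] at hint
  refine le_of_mul_le_mul_left ?_ (show 0 < 2 * Real.pi by positivity)
  refine le_trans (le_of_eq (by ring)) (hint.trans (le_of_eq ?_))
  by_cases h : k = 2
  · rw [if_pos h, if_pos h.symm]; ring
  · rw [if_neg h, if_neg (Ne.symm h)]; ring

/-! ### Moments of the roots in Joukowski coordinates -/

lemma tendsto_affine_log_div (A b : ℝ) (m : ℕ) :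
    Tendsto (fun n : ℕ => (A + n * b + m * Real.log (Real.sqrt n)) / ((n - m : ℕ) : ℝ))
      atTop (𝓝 b) := by
  have hn : Tendsto (fun n : ℕ => (n : ℝ)) atTop atTop := tendsto_natCast_atTop_atTop
  have h1 : Tendsto (fun n : ℕ => Real.log (n : ℝ) / (n : ℝ)) atTop (𝓝 0) :=
    (Real.isLittleO_log_id_atTop.tendsto_div_nhds_zero).comp hn
  have h2 : ∀ a : ℝ, Tendsto (fun n : ℕ => a / (n : ℝ)) atTop (𝓝 0) := fun a =>
    tendsto_const_nhds.div_atTop hn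
  have h3 : Tendsto (fun n : ℕ => (A / n + b + m / 2 * (Real.log n / n)) / (1 - (m : ℝ) / n))
      atTop (𝓝 ((0 + b + m / 2 * 0) / (1 - 0))) :=
    (((h2 A).add tendsto_const_nhds).add (h1.const_mul _)).div
      (tendsto_const_nhds.sub (h2 m)) (by norm_num)
  simp only [mul_zero, zero_add, add_zero, sub_zero, div_one] at h3
  refine h3.congr' ?_
  filter_upwards [eventually_gt_atTop m] with n hn
  have hn0 : (n : ℝ) ≠ 0 := by
    have : n ≠ 0 := by omega
    exact_mod_cast this
  have hnm : (n : ℝ) - m ≠ 0 := by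
    have : (m : ℝ) < n := by exact_mod_cast hn
    linarith
  rw [Nat.cast_sub hn.le, Real.log_sqrt (Nat.cast_nonneg n)]
  field_simp

/-- The average of `F` over the complex roots of `p`, with multiplicity (zero if `p` is constant).
-/
noncomputable def rootAvg (p : ℂ[X]) (F : ℂ → ℝ) : ℝ :=
  (p.roots.map F).sum / (p.natDegree : ℝ)

lemma rootAvg_add (p : ℂ[X]) (F G : ℂ → ℝ) :
    rootAvg p (fun z => F z + G z) = rootAvg p F + rootAvg p G := by
  rw [rootAvg, Multiset.sum_map_add, add_div]; rfl

lemma rootAvg_const_mul (p : ℂ[X]) (a : ℝ) (F : ℂ → ℝ) :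
    rootAvg p (fun z => a * F z) = a * rootAvg p F := by
  rw [rootAvg, Multiset.sum_map_mul_left, mul_div_assoc]; rfl

lemma rootAvg_mono (p : ℂ[X]) {F G : ℂ → ℝ} (h : ∀ z, F z ≤ G z) :
    rootAvg p F ≤ rootAvg p G :=
  div_le_div_of_nonneg_right (Multiset.sum_map_le_sum_map _ _ fun z _ => h z) (Nat.cast_nonneg _)

lemma rootAvg_const {p : ℂ[X]} (hp : p.natDegree ≠ 0) (a : ℝ) : rootAvg p (fun _ => a) = a := by
  have hc : p.roots.card = p.natDegree := (IsAlgClosed.splits p).natDegree_eq_card_roots.symm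
  rw [rootAvg, Multiset.map_const', Multiset.sum_replicate, hc, nsmul_eq_mul,
    mul_div_cancel_left₀]
  exact_mod_cast hp

/-- `jensen_ineq` on the scale of the degree: the leading coefficient, the degree defect `m` and the
constant `K` only contribute `O(log n)`. -/
lemma eventually_rootAvg_le {p : ℕ → ℂ[X]} {τ : ℝ} (hτ : 0 < τ) {om : ℂ → ℂ}
    (hom : ∀ z, om z ≠ 0 ∧ ‖om z‖ ≤ 1 ∧ z = τ * (om z + (om z)⁻¹)) {m : ℕ} {L : ℝ} (hL : 0 < L)
    (hdeg : ∀ n, 1 ≤ n → m ≤ n → (p n).natDegree = n - m ∧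
      L / Real.sqrt n ^ m ≤ ‖(p n).leadingCoeff‖)
    (hbd : ∀ ε > 0, ∃ K > 0, ∀ n : ℕ, 1 ≤ n → ∀ θ : ℝ,
      ‖(p n).eval ((2 * τ * Real.cos θ : ℝ) : ℂ)‖ ≤
        K * τ ^ n * Real.exp (n * (ε + Real.cos (2 * θ) / 2)))
    {k : ℕ} (hk : k ≠ 0) {s : ℝ} (hs : |s| ≤ 1) {ε : ℝ} (hε : 0 < ε) :
    ∀ᶠ n in atTop, rootAvg (p n) (fun z => -Real.log ‖om z‖ - s / k * (om z ^ k).re) ≤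
      (if k = 2 then s / 4 else 0) + ε := by
  set q : ℝ := if k = 2 then s / 4 else 0 with hq
  obtain ⟨K, hK, hKb⟩ := hbd (ε / 2) (by positivity)
  have ht := tendsto_affine_log_div (Real.log K + m * Real.log τ - Real.log L) (ε / 2 + q) m
  filter_upwards [ht.eventually_le_const (show ε / 2 + q < q + ε by linarith),
    eventually_ge_atTop (m + 1)] with n h1 hn
  obtain ⟨hd, hl⟩ := hdeg n (by omega) (by omega)
  have hn0 : (0 : ℝ) < Real.sqrt n := Real.sqrt_pos.2 (by exact_mod_cast (by omega : 0 < n))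
  have hlpos : 0 < L / Real.sqrt n ^ m := by positivity
  have hp : p n ≠ 0 := by
    intro h
    rw [h] at hl
    simp at hl
    linarith
  have hB : 0 < K * τ ^ n * Real.exp (n * (ε / 2)) := by positivity
  have hj := jensen_ineq hp hτ hom hB (N := n) (fun θ => by
    rw [mul_assoc (K * τ ^ n), ← Real.exp_add, ← mul_add]
    exact hKb n (by omega) θ) hk hs
  have hlog := Real.log_le_log hlpos hl
  rw [Real.log_div hL.ne' (by positivity), Real.log_pow] at hlog
  rw [Real.log_mul (by positivity) (by positivity), Real.log_mul hK.ne' (by positivity),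
    Real.log_pow, Real.log_exp, ← hq] at hj
  refine le_trans ?_ h1
  rw [rootAvg, ← hd]
  refine div_le_div_of_nonneg_right ?_ (Nat.cast_nonneg _)
  have hdd : ((p n).natDegree : ℝ) = n - m := by
    rw [hd, Nat.cast_sub (by omega)]
  rw [hdd] at hj
  linarith

/-- Asymptotics of the inverse Joukowski coordinates of the roots: they accumulate on the unit
circle, and their power moments converge to the cosine moments of the semicircle law. -/
lemma tendsto_rootAvg_moments {p : ℕ → ℂ[X]} {τ : ℝ} (hτ : 0 < τ) {om : ℂ → ℂ}
    (hom : ∀ z, om z ≠ 0 ∧ ‖om z‖ ≤ 1 ∧ z = τ * (om z + (om z)⁻¹)) {m : ℕ} {L : ℝ} (hL : 0 < L)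
    (hdeg : ∀ n, 1 ≤ n → m ≤ n → (p n).natDegree = n - m ∧
      L / Real.sqrt n ^ m ≤ ‖(p n).leadingCoeff‖)
    (hbd : ∀ ε > 0, ∃ K > 0, ∀ n : ℕ, 1 ≤ n → ∀ θ : ℝ,
      ‖(p n).eval ((2 * τ * Real.cos θ : ℝ) : ℂ)‖ ≤
        K * τ ^ n * Real.exp (n * (ε + Real.cos (2 * θ) / 2))) :
    Tendsto (fun n => rootAvg (p n) fun z => -Real.log ‖om z‖) atTop (𝓝 0) ∧
    ∀ k : ℕ, k ≠ 0 → Tendsto (fun n => rootAvg (p n) fun z => (om z ^ k).re) atTop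
      (𝓝 (if k = 2 then -1 / 2 else 0)) := by
  have key := fun {k : ℕ} (hk : k ≠ 0) {s : ℝ} (hs : |s| ≤ 1) {ε : ℝ} (hε : 0 < ε) =>
    eventually_rootAvg_le hτ hom hL hdeg hbd hk hs hε
  have hnn : ∀ z, 0 ≤ -Real.log ‖om z‖ := fun z => by
    have := Real.log_nonpos (norm_nonneg _) (hom z).2.1
    linarith
  have hz : ∀ q : ℂ[X], rootAvg q (fun _ => (0 : ℝ)) = 0 := fun q => by simp [rootAvg]
  have hsplit : ∀ (q : ℂ[X]) (a : ℝ) (k : ℕ),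
      rootAvg q (fun z => -Real.log ‖om z‖ - a * (om z ^ k).re) =
      rootAvg q (fun z => -Real.log ‖om z‖) + (-a) * rootAvg q (fun z => (om z ^ k).re) := by
    intro q a k
    rw [← rootAvg_const_mul, ← rootAvg_add]
    congr 1
    ext z; ring
  have hpos : ∀ q : ℂ[X], 0 ≤ rootAvg q (fun z => -Real.log ‖om z‖) := fun q => by
    rw [← hz q]; exact rootAvg_mono q hnn
  -- The weights `s = 0, 1, -1` give three upper bounds; the two signs of `s` pinch the moment.
  refine ⟨?_, fun k hk => ?_⟩
  · rw [Metric.tendsto_nhds]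
    intro ε hε
    filter_upwards [key one_ne_zero (s := 0) (by simp) (half_pos hε)] with n hn
    rw [hsplit] at hn
    simp at hn
    rw [Real.dist_eq, sub_zero, abs_of_nonneg (hpos _)]
    linarith
  · rw [Metric.tendsto_nhds]
    intro ε hε
    have hk0 : (0 : ℝ) < k := by exact_mod_cast Nat.pos_of_ne_zero hk
    have hδ : 0 < ε / (2 * k) := by positivity
    filter_upwards [key hk (s := 1) (by simp) hδ, key hk (s := -1) (by simp) hδ] with n h1 h2
    rw [hsplit] at h1 h2
    have h0 := hpos (p n)
    set x := rootAvg (p n) (fun z => (om z ^ k).re)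
    set y := rootAvg (p n) (fun z => -Real.log ‖om z‖)
    have h1' : -(1 / (k : ℝ)) * x ≤ (if k = 2 then 1 / 4 else 0) + ε / (2 * k) := by linarith
    have h2' : (1 / (k : ℝ)) * x ≤ (if k = 2 then -1 / 4 else 0) + ε / (2 * k) := by
      rw [neg_div, neg_neg] at h2; linarith
    have e1 : -x ≤ k * (if k = 2 then 1 / 4 else 0) + ε / 2 := by
      have := mul_le_mul_of_nonneg_left h1' hk0.le
      field_simp at this ⊢
      linarith
    have e2 : x ≤ k * (if k = 2 then -1 / 4 else 0) + ε / 2 := by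
      have := mul_le_mul_of_nonneg_left h2' hk0.le
      field_simp at this ⊢
      linarith
    rw [Real.dist_eq, abs_lt]
    by_cases h : k = 2
    · subst h
      norm_num at e1 e2 ⊢
      constructor <;> linarith
    · simp only [if_neg h] at e1 e2 ⊢
      constructor <;> linarith

/-! ### Even trigonometric polynomials -/

/-- The real span of the functions `w ↦ Re (w ^ k)`; on the unit circle these are the even
trigonometric polynomials. -/
noncomputable def cosSpan : Submodule ℝ (ℂ → ℝ) :=
  Submodule.span ℝ (Set.range fun (k : ℕ) (w : ℂ) => (w ^ k).re)

lemma mem_cosSpan (k : ℕ) : (fun w : ℂ => (w ^ k).re) ∈ cosSpan :=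
  Submodule.subset_span ⟨k, rfl⟩

lemma continuous_of_mem_cosSpan {Q : ℂ → ℝ} (hQ : Q ∈ cosSpan) : Continuous Q := by
  induction hQ using Submodule.span_induction with
  | mem x hx => obtain ⟨k, rfl⟩ := hx; fun_prop
  | zero => exact continuous_const
  | add x y _ _ hx hy => exact hx.add hy
  | smul a x _ hx => exact hx.const_smul a

lemma re_mul_re_pow {w : ℂ} (hw : ‖w‖ = 1) (k : ℕ) :
    w.re * (w ^ (k + 1)).re = 1 / 2 * (w ^ (k + 2)).re + 1 / 2 * (w ^ k).re := by
  have h : w.re * w.re + w.im * w.im = 1 := by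
    rw [← Complex.normSq_apply, Complex.normSq_eq_norm_sq, hw]; norm_num
  rw [pow_succ w (k + 1), pow_succ w k]
  simp only [Complex.mul_re, Complex.mul_im]
  linear_combination ((w ^ k).re / 2) * h

lemma cosSpan_re_mul {Q : ℂ → ℝ} (hQ : Q ∈ cosSpan) :
    ∃ R ∈ cosSpan, ∀ w : ℂ, ‖w‖ = 1 → w.re * Q w = R w := by
  induction hQ using Submodule.span_induction with
  | mem x hx =>
    obtain ⟨k, rfl⟩ := hx
    cases k with
    | zero => exact ⟨_, mem_cosSpan 1, fun w _ => by simp⟩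
    | succ k =>
      exact ⟨_, add_mem (cosSpan.smul_mem (1 / 2) (mem_cosSpan (k + 2)))
        (cosSpan.smul_mem (1 / 2) (mem_cosSpan k)), fun w hw => re_mul_re_pow hw k⟩
  | zero => exact ⟨0, zero_mem _, fun w _ => by simp⟩
  | add x y _ _ hx hy =>
    obtain ⟨R, hR, h1⟩ := hx
    obtain ⟨T, hT, h2⟩ := hy
    exact ⟨_, add_mem hR hT, fun w hw => by
      rw [Pi.add_apply, Pi.add_apply, mul_add, h1 w hw, h2 w hw]⟩
  | smul a x _ hx =>
    obtain ⟨R, hR, h1⟩ := hx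
    exact ⟨_, cosSpan.smul_mem a hR, fun w hw => by
      rw [Pi.smul_apply, Pi.smul_apply, smul_eq_mul, smul_eq_mul, ← h1 w hw]; ring⟩

/-- A polynomial in `cos θ` is an even trigonometric polynomial. -/
lemma exists_cosSpan_eq (P : ℝ[X]) :
    ∃ Q ∈ cosSpan, ∀ w : ℂ, ‖w‖ = 1 → P.eval w.re = Q w := by
  induction P using Polynomial.induction_on with
  | C a => exact ⟨_, cosSpan.smul_mem a (mem_cosSpan 0), fun w _ => by simp⟩
  | add p q hp hq =>
    obtain ⟨R, hR, h1⟩ := hp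
    obtain ⟨T, hT, h2⟩ := hq
    exact ⟨_, add_mem hR hT, fun w hw => by rw [Polynomial.eval_add, h1 w hw, h2 w hw]; rfl⟩
  | monomial n a ih =>
    obtain ⟨R, hR, h1⟩ := ih
    obtain ⟨T, hT, h2⟩ := cosSpan_re_mul hR
    refine ⟨T, hT, fun w hw => ?_⟩
    rw [← h2 w hw, ← h1 w hw]
    simp
    ring

/-! ### The semicircle law in the angular coordinate -/

/-- The semicircle functional in the angular coordinate of `x = 2τ cos θ`: the mean over the unit
circle with weight `1 - cos 2θ`. -/
noncomputable def semiAvg (h : ℂ → ℝ) : ℝ :=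
  1 / (2 * Real.pi) * ∫ θ in (0 : ℝ)..2 * Real.pi,
    (1 - Real.cos ((2 : ℕ) * θ)) * h (Complex.exp (θ * I))

lemma integral_one_sub_cos_two :
    ∫ θ in (0 : ℝ)..2 * Real.pi, (1 - Real.cos ((2 : ℕ) * θ)) = 2 * Real.pi := by
  have h := integral_cos_int 2 two_ne_zero
  rw [intervalIntegral.integral_sub intervalIntegrable_const
    (Continuous.intervalIntegrable (by fun_prop) _ _)]
  rw [Int.cast_ofNat] at h
  rw [Nat.cast_ofNat, h]
  simp

lemma exp_mul_I_pow_re (k : ℕ) (θ : ℝ) : (Complex.exp (θ * I) ^ k).re = Real.cos (k * θ) := by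
  rw [← Complex.exp_nat_mul, ← mul_assoc, ← Complex.ofReal_natCast, ← Complex.ofReal_mul,
    Complex.exp_ofReal_mul_I_re]

lemma semiAvg_pow (k : ℕ) : semiAvg (fun w => (w ^ k).re) =
    if k = 0 then 1 else if k = 2 then -1 / 2 else 0 := by
  rw [semiAvg]
  simp_rw [exp_mul_I_pow_re]
  by_cases hk : k = 0
  · subst hk
    simp only [CharP.cast_eq_zero, zero_mul, Real.cos_zero, mul_one, if_true]
    rw [integral_one_sub_cos_two]
    field_simp
  · rw [if_neg hk]
    simp_rw [sub_mul, one_mul]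
    rw [intervalIntegral.integral_sub (Continuous.intervalIntegrable (by fun_prop) _ _)
      (Continuous.intervalIntegrable (by fun_prop) _ _), integral_cos_mul_cos 2 k two_ne_zero]
    have h := integral_cos_int k (by exact_mod_cast hk)
    rw [Int.cast_natCast] at h
    rw [h]
    by_cases h2 : k = 2
    · rw [if_pos h2, if_pos h2.symm]; field_simp; norm_num
    · rw [if_neg h2, if_neg (Ne.symm h2)]; simp

lemma semiAvg_add {h₁ h₂ : ℂ → ℝ} (c₁ : Continuous h₁) (c₂ : Continuous h₂) :
    semiAvg (h₁ + h₂) = semiAvg h₁ + semiAvg h₂ := by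
  rw [semiAvg, semiAvg, semiAvg, ← mul_add, ← intervalIntegral.integral_add
    (Continuous.intervalIntegrable (by fun_prop) _ _)
    (Continuous.intervalIntegrable (by fun_prop) _ _)]
  simp_rw [Pi.add_apply, mul_add]

lemma semiAvg_smul (a : ℝ) (h : ℂ → ℝ) : semiAvg (a • h) = a * semiAvg h := by
  simp only [semiAvg, Pi.smul_apply, smul_eq_mul, mul_left_comm _ a,
    intervalIntegral.integral_const_mul]

lemma semiAvg_sub_le {h Q : ℂ → ℝ} (hc : Continuous fun θ : ℝ => h (Complex.exp (θ * I)))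
    (hQ : Continuous Q) {ε : ℝ} (hε : ∀ w, ‖w‖ = 1 → |h w - Q w| ≤ ε) :
    |semiAvg h - semiAvg Q| ≤ ε := by
  have hpi := Real.pi_pos
  have hQc : Continuous fun θ : ℝ => Q (Complex.exp (θ * I)) := by fun_prop
  have hwc : Continuous fun θ : ℝ => 1 - Real.cos ((2 : ℕ) * θ) := by fun_prop
  rw [semiAvg, semiAvg, ← mul_sub, ← intervalIntegral.integral_sub
    (f := fun θ : ℝ => (1 - Real.cos ((2 : ℕ) * θ)) * h (Complex.exp (θ * I)))
    (g := fun θ : ℝ => (1 - Real.cos ((2 : ℕ) * θ)) * Q (Complex.exp (θ * I)))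
    ((hwc.mul hc).intervalIntegrable _ _) ((hwc.mul hQc).intervalIntegrable _ _), abs_mul,
    abs_of_pos (show 0 < 1 / (2 * Real.pi) by positivity)]
  have hb : |∫ θ in (0 : ℝ)..2 * Real.pi, ((1 - Real.cos ((2 : ℕ) * θ)) *
      h (Complex.exp (θ * I)) - (1 - Real.cos ((2 : ℕ) * θ)) * Q (Complex.exp (θ * I)))| ≤
      ∫ θ in (0 : ℝ)..2 * Real.pi, (1 - Real.cos ((2 : ℕ) * θ)) * ε := by
    refine (intervalIntegral.abs_integral_le_integral_abs (by positivity)).trans ?_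
    refine intervalIntegral.integral_mono_on (by positivity)
      (((hwc.mul hc).sub (hwc.mul hQc)).abs.intervalIntegrable _ _)
      (Continuous.intervalIntegrable (by fun_prop) _ _) fun θ _ => ?_
    have h0 : 0 ≤ 1 - Real.cos ((2 : ℕ) * θ) := by linarith [Real.cos_le_one ((2 : ℕ) * θ)]
    rw [← mul_sub, abs_mul, abs_of_nonneg h0]
    exact mul_le_mul_of_nonneg_left (hε _ (Complex.norm_exp_ofReal_mul_I θ)) h0
  rw [intervalIntegral.integral_mul_const, integral_one_sub_cos_two] at hb
  calc _ ≤ 1 / (2 * Real.pi) * (2 * Real.pi * ε) := by gcongr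
    _ = ε := by field_simp

/-- Density form of the semicircle functional, by the substitution `x = 2τ cos θ`. -/
lemma integral_semicircle {τ : ℝ} (hτ : 0 < τ) {g : ℂ → ℝ} (hg : Continuous g) :
    ∫ x : ℝ, g (x : ℂ) * (Real.sqrt (max (4 * τ ^ 2 - x ^ 2) 0) / (2 * Real.pi * τ ^ 2)) =
      semiAvg (fun w => g (τ * (w + w⁻¹))) := by
  have hpi := Real.pi_pos
  set G : ℝ → ℝ := fun x =>
    g (x : ℂ) * (Real.sqrt (max (4 * τ ^ 2 - x ^ 2) 0) / (2 * Real.pi * τ ^ 2)) with hG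
  have hGc : Continuous G := by fun_prop
  have hsupp : Function.support G ⊆ Set.Ioc (-(2 * τ)) (2 * τ) := by
    intro x hx
    by_contra hcon
    apply hx
    have : 4 * τ ^ 2 - x ^ 2 ≤ 0 := by
      rw [Set.mem_Ioc, not_and_or, not_lt, not_le] at hcon
      rcases hcon with h | h <;> nlinarith
    simp only [hG]
    rw [max_eq_right this, Real.sqrt_zero, zero_div, mul_zero]
  rw [← intervalIntegral.integral_eq_integral_of_support_subset hsupp]
  set H : ℝ → ℝ := fun θ => (1 - Real.cos (2 * θ)) * g ((2 * τ * Real.cos θ : ℝ) : ℂ) with hH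
  have hHc : Continuous H := by fun_prop
  have hsub := intervalIntegral.integral_comp_mul_deriv (a := 0) (b := Real.pi)
    (f := fun θ => 2 * τ * Real.cos θ) (f' := fun θ => 2 * τ * -Real.sin θ) (g := G)
    (fun θ _ => (Real.hasDerivAt_cos θ).const_mul (2 * τ)) (by fun_prop) hGc
  simp only [Function.comp_def, Real.cos_zero, Real.cos_pi, mul_one, mul_neg] at hsub
  have h1 : ∫ x in -(2 * τ)..2 * τ, G x = 1 / Real.pi * ∫ θ in (0 : ℝ)..Real.pi, H θ := by
    rw [intervalIntegral.integral_symm, ← hsub, ← intervalIntegral.integral_const_mul,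
      ← intervalIntegral.integral_neg]
    refine intervalIntegral.integral_congr fun θ hθ => ?_
    rw [Set.uIcc_of_le hpi.le] at hθ
    have hs := Real.sin_nonneg_of_mem_Icc hθ
    have e : 4 * τ ^ 2 - (2 * τ * Real.cos θ) ^ 2 = (2 * τ * Real.sin θ) ^ 2 := by
      linear_combination (-4 * τ ^ 2) * Real.sin_sq_add_cos_sq θ
    simp only [hG, hH]
    rw [e, max_eq_left (sq_nonneg _), Real.sqrt_sq (by positivity), Real.cos_two_mul,
      Real.cos_sq']
    field_simp
    ring
  have h2 : ∫ θ in Real.pi..2 * Real.pi, H θ = ∫ θ in (0 : ℝ)..Real.pi, H θ := by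
    have := intervalIntegral.integral_comp_sub_left (a := 0) (b := Real.pi) H (2 * Real.pi)
    rw [sub_zero, show 2 * Real.pi - Real.pi = Real.pi by ring] at this
    rw [← this]
    refine intervalIntegral.integral_congr fun θ _ => ?_
    simp only [hH]
    rw [Real.cos_two_pi_sub, show 2 * (2 * Real.pi - θ) = (2 : ℕ) * (2 * Real.pi) - 2 * θ by
      push_cast; ring, Real.cos_nat_mul_two_pi_sub]
  have h3 : semiAvg (fun w => g (τ * (w + w⁻¹))) =
      1 / (2 * Real.pi) * ∫ θ in (0 : ℝ)..2 * Real.pi, H θ := by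
    rw [semiAvg]
    congr 2
    ext θ
    simp only [hH]
    rw [← Complex.exp_neg, Nat.cast_ofNat]
    congr 2
    push_cast
    rw [Complex.cos, neg_mul]
    ring
  rw [h1, h3, ← intervalIntegral.integral_add_adjacent_intervals (a := 0) (b := Real.pi)
    (c := 2 * Real.pi)
    (hHc.intervalIntegrable _ _) (hHc.intervalIntegrable _ _), h2]
  field_simp
  ring

/-! ### Weak convergence from moments -/

/-- A function that is small on the unit circle and bounded on the disc is small up to a multiple of
`-log |w|`. This controls test functions at roots whose Joukowski coordinate lies well inside
the disc. -/
lemma exists_pointwise_bound {D : ℂ → ℝ} (hD : ContinuousOn D {0}ᶜ) {A : ℝ}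
    (hA : ∀ w, ‖w‖ ≤ 1 → |D w| ≤ A) {ε : ℝ} (hε : ∀ w, ‖w‖ = 1 → |D w| < ε) :
    ∃ B : ℝ, ∀ w, w ≠ 0 → ‖w‖ ≤ 1 → |D w| ≤ ε + B * -Real.log ‖w‖ := by
  have hε0 : 0 < ε := (abs_nonneg _).trans_lt (hε 1 (by simp))
  have hA0 : 0 ≤ A := (abs_nonneg _).trans (hA 0 (by simp))
  set K : Set ℂ := Metric.closedBall 0 1 ∩ {w | 1 / 2 ≤ ‖w‖} ∩ (fun w => |D w|) ⁻¹' Set.Ici ε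
    with hK
  have hann : IsClosed (Metric.closedBall (0 : ℂ) 1 ∩ {w | 1 / 2 ≤ ‖w‖}) :=
    Metric.isClosed_closedBall.inter (isClosed_le continuous_const continuous_norm)
  have hcont : ContinuousOn (fun w => |D w|) (Metric.closedBall (0 : ℂ) 1 ∩ {w | 1 / 2 ≤ ‖w‖}) := by
    refine (hD.mono fun w hw => ?_).abs
    rintro rfl
    have := hw.2
    norm_num at this
  have hKc : IsCompact K :=
    (isCompact_closedBall (0 : ℂ) 1).of_isClosed_subset
      (hcont.preimage_isClosed_of_isClosed hann isClosed_Ici) fun w hw => hw.1.1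
  have hlogc : ContinuousOn (fun w : ℂ => -Real.log ‖w‖) K := by
    refine (continuousOn_id.norm.log fun w hw => ?_).neg
    have : 1 / 2 ≤ ‖w‖ := hw.1.2
    simp only [id]
    linarith
  -- `K` is a compact set that misses the unit circle, so `-log ‖w‖` is bounded below on it.
  obtain ⟨c, hc, hcK⟩ : ∃ c > 0, ∀ w ∈ K, c ≤ -Real.log ‖w‖ := by
    rcases K.eq_empty_or_nonempty with h | h
    · exact ⟨1, one_pos, by simp [h]⟩
    · obtain ⟨w, hw, hmin⟩ := hKc.exists_isMinOn h hlogc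
      refine ⟨-Real.log ‖w‖, ?_, fun v hv => hmin hv⟩
      have h1 : ‖w‖ ≤ 1 := by simpa using hw.1.1
      have h2 : 1 / 2 ≤ ‖w‖ := hw.1.2
      have h3 : ‖w‖ ≠ 1 := fun h => absurd (hε w h) (not_lt.2 hw.2)
      have := Real.log_neg (by linarith) (lt_of_le_of_ne h1 h3)
      linarith
  have hl2 : 0 < Real.log 2 := Real.log_pos (by norm_num)
  refine ⟨A / min c (Real.log 2), fun w hw0 hw1 => ?_⟩
  have hmin : 0 < min c (Real.log 2) := lt_min hc hl2
  have hlog : 0 ≤ -Real.log ‖w‖ := by linarith [Real.log_nonpos (norm_nonneg w) hw1]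
  by_cases hbig : min c (Real.log 2) ≤ -Real.log ‖w‖
  · have : A ≤ A / min c (Real.log 2) * -Real.log ‖w‖ := by
      rw [div_mul_eq_mul_div, le_div_iff₀ hmin]
      exact mul_le_mul_of_nonneg_left hbig hA0
    linarith [hA w hw1]
  · have hB : 0 ≤ A / min c (Real.log 2) * -Real.log ‖w‖ := by positivity
    rw [not_le] at hbig
    suffices |D w| < ε by linarith
    by_contra hcon
    have hhalf : 1 / 2 ≤ ‖w‖ := by
      have h1 : -Real.log 2 < Real.log ‖w‖ := by linarith [min_le_right c (Real.log 2)]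
      rw [← Real.log_inv] at h1
      have := (Real.log_lt_log_iff (by norm_num) (norm_pos_iff.2 hw0)).1 h1
      rw [one_div]; exact this.le
    have := hcK w ⟨⟨by simpa using hw1, hhalf⟩, not_lt.1 hcon⟩
    linarith [min_le_left c (Real.log 2)]

lemma tendsto_rootAvg_cosSpan {p : ℕ → ℂ[X]} {om : ℂ → ℂ}
    (hdeg : ∀ᶠ n in atTop, (p n).natDegree ≠ 0)
    (hmom : ∀ k : ℕ, k ≠ 0 → Tendsto (fun n => rootAvg (p n) fun z => (om z ^ k).re) atTop
      (𝓝 (if k = 2 then -1 / 2 else 0))) {Q : ℂ → ℝ} (hQ : Q ∈ cosSpan) :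
    Tendsto (fun n => rootAvg (p n) fun z => Q (om z)) atTop (𝓝 (semiAvg Q)) := by
  induction hQ using Submodule.span_induction with
  | mem x hx =>
    obtain ⟨k, rfl⟩ := hx
    rw [semiAvg_pow]
    by_cases hk : k = 0
    · subst hk
      rw [if_pos rfl]
      refine tendsto_const_nhds.congr' ?_
      filter_upwards [hdeg] with n hn
      simp only [pow_zero, Complex.one_re]
      rw [rootAvg_const hn]
    · rw [if_neg hk]
      exact hmom k hk
  | zero => simp [semiAvg, rootAvg]
  | add x y hx' hy' hx hy =>
    rw [semiAvg_add (continuous_of_mem_cosSpan hx') (continuous_of_mem_cosSpan hy')]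
    simp_rw [Pi.add_apply, rootAvg_add]
    exact hx.add hy
  | smul a x _ hx =>
    rw [semiAvg_smul]
    simp_rw [Pi.smul_apply, smul_eq_mul, rootAvg_const_mul]
    exact hx.const_mul a

/-- Weierstrass approximation of `x ↦ g x` on `[-2τ, 2τ]` by even trigonometric polynomials in the
Joukowski angle, with `exists_pointwise_bound` controlling the error off the circle. -/
lemma tendsto_rootAvg_semicircle {p : ℕ → ℂ[X]} {τ : ℝ} {om : ℂ → ℂ}
    (hom : ∀ z, om z ≠ 0 ∧ ‖om z‖ ≤ 1 ∧ z = τ * (om z + (om z)⁻¹))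
    (hdeg : ∀ᶠ n in atTop, (p n).natDegree ≠ 0)
    (hlog : Tendsto (fun n => rootAvg (p n) fun z => -Real.log ‖om z‖) atTop (𝓝 0))
    (hmom : ∀ k : ℕ, k ≠ 0 → Tendsto (fun n => rootAvg (p n) fun z => (om z ^ k).re) atTop
      (𝓝 (if k = 2 then -1 / 2 else 0)))
    {g : ℂ → ℝ} (hg : Continuous g) {A : ℝ} (hA : ∀ z, |g z| ≤ A) :
    Tendsto (fun n => rootAvg (p n) g) atTop (𝓝 (semiAvg fun w => g (τ * (w + w⁻¹)))) := by
  set h : ℂ → ℝ := fun w => g (τ * (w + w⁻¹)) with hh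
  have hgh : ∀ z, g z = h (om z) := fun z => by
    simp only [hh]; rw [← (hom z).2.2]
  have hhc : ContinuousOn h {0}ᶜ := by
    refine hg.comp_continuousOn (continuousOn_const.mul (continuousOn_id.add
      (continuousOn_id.inv₀ fun w hw => hw)))
  rw [Metric.tendsto_nhds]
  intro ε₀ hε₀
  set ε : ℝ := ε₀ / 5 with hε
  have hε0 : 0 < ε := by positivity
  obtain ⟨P, hP⟩ := exists_polynomial_near_of_continuousOn (-1) 1
    (fun x => g ((2 * τ * x : ℝ) : ℂ)) (by fun_prop) ε hε0
  obtain ⟨Q, hQ, hPQ⟩ := exists_cosSpan_eq P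
  have hQc := continuous_of_mem_cosSpan hQ
  have hcirc : ∀ w : ℂ, ‖w‖ = 1 → |h w - Q w| < ε := by
    intro w hw
    have hre : w.re ∈ Set.Icc (-1 : ℝ) 1 := abs_le.1 ((Complex.abs_re_le_norm w).trans hw.le)
    have e : (τ : ℂ) * (w + w⁻¹) = ((2 * τ * w.re : ℝ) : ℂ) := by
      rw [Complex.inv_eq_conj hw, Complex.add_conj]
      push_cast; ring
    rw [abs_sub_comm, ← hPQ w hw]
    simp only [hh]
    rw [e]
    exact hP _ hre
  obtain ⟨A', hA'⟩ := (isCompact_closedBall (0 : ℂ) 1).exists_bound_of_continuousOn hQc.continuousOn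
  obtain ⟨B, hB⟩ := exists_pointwise_bound (D := fun w => h w - Q w) (A := A + A')
    (hhc.sub hQc.continuousOn) (fun w hw => (abs_sub _ _).trans (add_le_add (hA _)
      (hA' w (by simpa using hw)))) hcirc
  have hexp : Continuous fun θ : ℝ => h (Complex.exp (θ * I)) := by
    refine hhc.comp_continuous (by fun_prop) fun θ => Complex.exp_ne_zero _
  have hs := semiAvg_sub_le hexp hQc fun w hw => (hcirc w hw).le
  have hlog' : Tendsto (fun n => B * rootAvg (p n) fun z => -Real.log ‖om z‖) atTop (𝓝 0) := by
    simpa using hlog.const_mul B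
  filter_upwards [hdeg, hlog'.eventually_le_const hε0,
    (Metric.tendsto_nhds.1 (tendsto_rootAvg_cosSpan hdeg hmom hQ)) ε hε0] with n hn h1 h2
  have hup : rootAvg (p n) g ≤ rootAvg (p n) (fun z => Q (om z)) +
      (ε + B * rootAvg (p n) fun z => -Real.log ‖om z‖) := by
    rw [← rootAvg_const_mul, ← rootAvg_const hn ε, ← rootAvg_add, ← rootAvg_add]
    refine rootAvg_mono _ fun z => ?_
    have := (abs_le.1 (hB (om z) (hom z).1 (hom z).2.1)).2
    rw [hgh]; linarith
  have hlo : rootAvg (p n) (fun z => Q (om z)) ≤ rootAvg (p n) g +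
      (ε + B * rootAvg (p n) fun z => -Real.log ‖om z‖) := by
    rw [← rootAvg_const_mul, ← rootAvg_const hn ε, ← rootAvg_add, ← rootAvg_add]
    refine rootAvg_mono _ fun z => ?_
    have := (abs_le.1 (hB (om z) (hom z).1 (hom z).2.1)).1
    rw [hgh]; linarith
  rw [Real.dist_eq, abs_lt] at h2 ⊢
  have hs' := abs_le.1 hs
  constructor <;> linarith [h2.1, h2.2, hs'.1, hs'.2]

/-- Let `f` be entire of strip type with parameter `M ≥ 0`, data `(C, m, c, σ, (α_j))`, and
`σ ≠ 0`, and set `f_n(z) = f(z/√n)`. Then the empirical root distributions of the Appell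
polynomials `A_{n,f_n}` converge weakly to the semicircle law of variance `σ²`, the measure
on `ℝ` with density `x ↦ √(max(4σ²−x²,0))/(2πσ²)`. -/
theorem appell_semicircle_limit
    (M : ℝ) (hM : 0 ≤ M) (f : ℂ → ℂ) (hf : Differentiable ℂ f)
    (C : ℝ) (m : ℕ) (c σ : ℝ) (α : ℕ → ℂ)
    (hC : C ≠ 0) (hσ : σ ≠ 0)
    (hconj : ∃ e : Equiv.Perm ℕ, ∀ j, α (e j) = (starRingEnd ℂ) (α j))
    (hsum : Summable fun j => ‖α j‖ ^ 2)
    (him : ∀ j, α j ≠ 0 → |(1 / α j).im| ≤ M)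
    (hfeq : TendstoLocallyUniformly
      (fun (N : ℕ) (z : ℂ) => (C : ℂ) * z ^ m *
          Complex.exp (-(c : ℂ) * z - (σ : ℂ) ^ 2 / 2 * z ^ 2) *
          ∏ j ∈ Finset.range N, ((1 - α j * z) * Complex.exp (α j * z)))
      f atTop)
    (g : ℂ → ℝ) (hg : Continuous g) (hgb : ∃ Cb : ℝ, ∀ x : ℂ, |g x| ≤ Cb) :
    Tendsto (fun n : ℕ =>
        (((appell (fun z => f (z / (Real.sqrt n : ℂ))) n).roots.map g).sum) /
          ((appell (fun z => f (z / (Real.sqrt n : ℂ))) n).natDegree : ℝ))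
      atTop
      (𝓝 (∫ x : ℝ,
        g (x : ℂ) * (Real.sqrt (max (4 * σ ^ 2 - x ^ 2) 0) / (2 * Real.pi * σ ^ 2)))) := by
  have hτ : 0 < |σ| := abs_pos.2 hσ
  have hlim := fun z => (tendstoLocallyUniformlyOn_univ.2 hfeq).tendsto_at (Set.mem_univ z)
  have hgrow : ∀ ε : ℝ, 0 < ε → ∃ K : ℝ, 0 < K ∧
      ∀ z, ‖f z‖ ≤ K * Real.exp (ε * ‖z‖ ^ 2 - |σ| ^ 2 / 2 * (z ^ 2).re) := by
    intro ε hε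
    rw [sq_abs]
    exact strip_growth hsum hlim hε
  -- The argument needs only the order `μ` of `f` at the origin, so `μ = m` is not established.
  obtain ⟨μ, hμ, hμlt⟩ := exists_order hf (strip_ne_zero hC hfeq)
  obtain ⟨om, hom⟩ := exists_joukowski hτ
  set p : ℕ → ℂ[X] := fun n => appell (fun z => f (z / (Real.sqrt n : ℂ))) n with hp
  have hdeg : ∀ n, 1 ≤ n → μ ≤ n → (p n).natDegree = n - μ ∧
      ‖iteratedDeriv μ f 0‖ / Real.sqrt n ^ μ ≤ ‖(p n).leadingCoeff‖ :=
    fun n hn hμn => appell_degree_lead hf hμ hμlt hn hμn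
  obtain ⟨hlog, hmom⟩ := tendsto_rootAvg_moments hτ hom (norm_pos_iff.2 hμ) hdeg
    fun ε hε => appell_bound hf hτ hgrow hε
  have hdeg0 : ∀ᶠ n in atTop, (p n).natDegree ≠ 0 := by
    filter_upwards [eventually_ge_atTop (μ + 1)] with n hn
    rw [(hdeg n (by omega) (by omega)).1]
    omega
  obtain ⟨A, hA⟩ := hgb
  have hmain := tendsto_rootAvg_semicircle hom hdeg0 hlog hmom hg hA
  rw [← integral_semicircle hτ hg, sq_abs] at hmain
  exact hmain
end
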